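/- arXiv:1303.7291 — 4 statements merged into one kernel-verified Lean document; each statement's English description precedes it below -/
import Mathlib

section
/- Let σ > 0, C > 0, G > 0 and H ≥ 0. Consider F(γ) = σ·√((G + γ)² − H²) − γ·√(C² + σ²) on the set D = {γ ∈ ℝ : γ ≥ 0 and G + γ ≥ H}. Then: if √(C² + σ²)·H ≤ C·G, the supremum of F over D equals σ·√(G² − H²) and is attained at γ = 0; otherwise the supremum equals √(C² + σ²)·G − C·H and is attained at γ = (√(C² + σ²)/C)·H − G > 0. -/
theorem le_of_sq_aux {a b : ℝ} (h : a ^ 2 ≤ b ^ 2) (hb : 0 ≤ b) : a ≤ b :=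
  (le_abs_self a).trans (abs_le_of_sq_le_sq h hb)

theorem lasso_stmt1 (σ C G H : ℝ) (hσ : 0 < σ) (hC : 0 < C) (hG : 0 < G) (hH : 0 ≤ H) :
    (Real.sqrt (C ^ 2 + σ ^ 2) * H ≤ C * G →
      IsGreatest
        ((fun γ => σ * Real.sqrt ((G + γ) ^ 2 - H ^ 2) - γ * Real.sqrt (C ^ 2 + σ ^ 2)) ''
          {γ : ℝ | 0 ≤ γ ∧ H ≤ G + γ})
        (σ * Real.sqrt (G ^ 2 - H ^ 2)) ∧
      σ * Real.sqrt ((G + 0) ^ 2 - H ^ 2) - 0 * Real.sqrt (C ^ 2 + σ ^ 2)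
        = σ * Real.sqrt (G ^ 2 - H ^ 2)) ∧
    (C * G < Real.sqrt (C ^ 2 + σ ^ 2) * H →
      IsGreatest
        ((fun γ => σ * Real.sqrt ((G + γ) ^ 2 - H ^ 2) - γ * Real.sqrt (C ^ 2 + σ ^ 2)) ''
          {γ : ℝ | 0 ≤ γ ∧ H ≤ G + γ})
        (Real.sqrt (C ^ 2 + σ ^ 2) * G - C * H) ∧
      0 < Real.sqrt (C ^ 2 + σ ^ 2) / C * H - G ∧
      σ * Real.sqrt ((G + (Real.sqrt (C ^ 2 + σ ^ 2) / C * H - G)) ^ 2 - H ^ 2)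
          - (Real.sqrt (C ^ 2 + σ ^ 2) / C * H - G) * Real.sqrt (C ^ 2 + σ ^ 2)
        = Real.sqrt (C ^ 2 + σ ^ 2) * G - C * H) := by
  have hS2 : Real.sqrt (C ^ 2 + σ ^ 2) ^ 2 = C ^ 2 + σ ^ 2 := Real.sq_sqrt (by positivity)
  have hS0 : 0 < Real.sqrt (C ^ 2 + σ ^ 2) := Real.sqrt_pos.mpr (by positivity)
  generalize Real.sqrt (C ^ 2 + σ ^ 2) = S at hS2 hS0 ⊢
  have hCS : C ≤ S := by
    apply le_of_sq_aux ?_ hS0.le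
    nlinarith [sq_nonneg σ]
  constructor
  · intro h
    have hHG : H ≤ G := by
      have h1 : C * H ≤ S * H := mul_le_mul_of_nonneg_right hCS hH
      exact le_of_mul_le_mul_left (h1.trans h) hC
    refine ⟨⟨⟨0, ⟨le_refl _, by linarith⟩, by simp⟩, ?_⟩, by simp⟩
    rintro _ ⟨γ, ⟨hγ, hx⟩, rfl⟩
    have hr2 : Real.sqrt (G ^ 2 - H ^ 2) ^ 2 = G ^ 2 - H ^ 2 := Real.sq_sqrt (by nlinarith)
    have hr0 : 0 ≤ Real.sqrt (G ^ 2 - H ^ 2) := Real.sqrt_nonneg _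
    have ht2 : Real.sqrt ((G + γ) ^ 2 - H ^ 2) ^ 2 = (G + γ) ^ 2 - H ^ 2 :=
      Real.sq_sqrt (by nlinarith)
    show σ * Real.sqrt ((G + γ) ^ 2 - H ^ 2) - γ * S ≤ σ * Real.sqrt (G ^ 2 - H ^ 2)
    generalize Real.sqrt (G ^ 2 - H ^ 2) = r at hr2 hr0 ⊢
    generalize Real.sqrt ((G + γ) ^ 2 - H ^ 2) = t at ht2 ⊢
    have hk : σ * G ≤ r * S := by
      apply le_of_sq_aux ?_ (by positivity)
      have h2 : (S * H) ^ 2 ≤ (C * G) ^ 2 := pow_le_pow_left₀ (by positivity) h 2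
      rw [mul_pow, mul_pow] at h2 ⊢
      rw [hr2, hS2]
      rw [hS2] at h2
      linarith
    have hm : σ * t ≤ σ * r + γ * S := by
      apply le_of_sq_aux ?_ (by positivity)
      have e1 : (σ * t) ^ 2 = σ ^ 2 * ((G + γ) ^ 2 - H ^ 2) := by rw [mul_pow, ht2]
      have e2 : (σ * r + γ * S) ^ 2
          = σ ^ 2 * (G ^ 2 - H ^ 2) + 2 * (σ * γ) * (r * S) + γ ^ 2 * (C ^ 2 + σ ^ 2) := by
        rw [← hr2, ← hS2]; ring
      have e3 : 2 * (σ * γ) * (σ * G) ≤ 2 * (σ * γ) * (r * S) :=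
        mul_le_mul_of_nonneg_left hk (by positivity)
      rw [e1, e2]
      nlinarith [sq_nonneg (γ * C)]
    linarith
  · intro h
    have hpos : 0 < S / C * H - G := by
      have : G < S * H / C := by rw [lt_div_iff₀ hC]; linarith
      have e : S / C * H = S * H / C := by ring
      linarith
    have heq : σ * Real.sqrt ((G + (S / C * H - G)) ^ 2 - H ^ 2) - (S / C * H - G) * S
        = S * G - C * H := by
      have e : (G + (S / C * H - G)) ^ 2 - H ^ 2 = (σ * H / C) ^ 2 := by
        have : (G + (S / C * H - G)) ^ 2 - H ^ 2 = S ^ 2 * H ^ 2 / C ^ 2 - H ^ 2 := by ring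
        rw [this, hS2]; field_simp; ring
      rw [e, Real.sqrt_sq (by positivity)]
      have : σ * (σ * H / C) - (S / C * H - G) * S
          = (σ ^ 2 - S ^ 2) * H / C + S * G := by ring
      rw [this, hS2]; field_simp; ring
    refine ⟨⟨⟨S / C * H - G, ⟨hpos.le, ?_⟩, heq⟩, ?_⟩, hpos, heq⟩
    · have : 1 ≤ S / C := by rw [le_div_iff₀ hC]; linarith
      nlinarith
    rintro _ ⟨γ, ⟨hγ, hx⟩, rfl⟩
    show σ * Real.sqrt ((G + γ) ^ 2 - H ^ 2) - γ * S ≤ S * G - C * H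
    have ht2 : Real.sqrt ((G + γ) ^ 2 - H ^ 2) ^ 2 = (G + γ) ^ 2 - H ^ 2 :=
      Real.sq_sqrt (by nlinarith)
    generalize Real.sqrt ((G + γ) ^ 2 - H ^ 2) = t at ht2 ⊢
    have hm : σ * t ≤ S * (G + γ) - C * H := by
      apply le_of_sq_aux
      · have e1 : (σ * t) ^ 2 = σ ^ 2 * ((G + γ) ^ 2 - H ^ 2) := by rw [mul_pow, ht2]
        have e2 : (S * (G + γ) - C * H) ^ 2 - σ ^ 2 * ((G + γ) ^ 2 - H ^ 2)
            = (C * (G + γ) - S * H) ^ 2 := by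
          linear_combination ((G + γ) ^ 2 - H ^ 2) * hS2
        rw [e1]
        linarith [sq_nonneg (C * (G + γ) - S * H)]
      · have := mul_le_mul hCS hx hH hS0.le
        linarith
    linarith
end

section
/- Fix integers n ≥ 1 and k with 1 ≤ k ≤ n, let x̃ ∈ ℝⁿ be k-sparse nonnegative with x̃ ≠ 0, let σ > 0, C_w > 0, g ∈ ℝᵐ and h ∈ ℝⁿ. Then strong Lagrange duality holds for the constrained minimization defining ξ: ξ(σ, g, h, x̃) = sup { σ·√((‖g‖₂ + γ)² − ‖h + ν·1 − λ‖₂²) − Σ_{i=n−k+1}^{n} λ_i·x̃_i − γ·√(C_w² + σ²) : ν ≥ 0, λ ∈ ℝⁿ with 0 ≤ λ_i ≤ 2ν for all i, γ ≥ 0, and ‖g‖₂ + γ ≥ ‖h + ν·1 − λ‖₂ }. -/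
noncomputable def e2norm {d : ℕ} (x : Fin d → ℝ) : ℝ := Real.sqrt (∑ i, x i ^ 2)

noncomputable def l1norm {d : ℕ} (x : Fin d → ℝ) : ℝ := ∑ i, |x i|

def kSparseNonneg (n k : ℕ) (x : Fin n → ℝ) : Prop :=
  (∀ i : Fin n, (i : ℕ) < n - k → x i = 0) ∧ ∀ i, 0 ≤ x i

noncomputable def tailSum {n : ℕ} (k : ℕ) (lam x : Fin n → ℝ) : ℝ :=
  ∑ i ∈ Finset.univ.filter (fun i : Fin n => n - k ≤ (i : ℕ)), lam i * x i

theorem lag_dual {E ι : Type*} [AddCommGroup E] [Module ℝ E] [Fintype ι] [DecidableEq ι]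
    (f : E → ℝ) (g : ι → E → ℝ)
    (hf : ∀ u v : E, ∀ a b : ℝ, 0 ≤ a → 0 ≤ b → a + b = 1 → f (a • u + b • v) ≤ a * f u + b * f v)
    (hg : ∀ i, ∀ u v : E, ∀ a b : ℝ, 0 ≤ a → 0 ≤ b → a + b = 1 →
      g i (a • u + b • v) ≤ a * g i u + b * g i v)
    (w0 : E) (hw0 : ∀ i, g i w0 < 0) (p : ℝ) (hp : ∀ w, (∀ i, g i w ≤ 0) → p ≤ f w) :
    ∃ μ : ι → ℝ, (∀ i, 0 ≤ μ i) ∧ ∀ w, p ≤ f w + ∑ i, μ i * g i w := by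
  set A : Set ((ι → ℝ) × ℝ) := {y | ∃ w, (∀ i, g i w < y.1 i) ∧ f w < y.2} with hA
  have hconv : Convex ℝ A := by
    rintro y ⟨w, hw1, hw2⟩ z ⟨v, hv1, hv2⟩ a b ha hb hab
    have key : ∀ s t s' t' : ℝ, s < s' → t < t' → a * s + b * t < a * s' + b * t' := by
      intro s t s' t' h1 h2
      rcases ha.eq_or_lt with h0 | h0
      · have : b = 1 := by linarith
        subst this; subst h0; linarith
      · nlinarith [mul_lt_mul_of_pos_left h1 h0, mul_le_mul_of_nonneg_left h2.le hb]
    refine ⟨a • w + b • v, fun i => ?_, ?_⟩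
    · have := key _ _ _ _ (hw1 i) (hv1 i)
      simpa using (hg i w v a b ha hb hab).trans_lt this
    · have := key _ _ _ _ hw2 hv2
      simpa using (hf w v a b ha hb hab).trans_lt this
  have hopen : IsOpen A := by
    have : A = ⋃ w, ((⋂ i, {y : (ι → ℝ) × ℝ | g i w < y.1 i}) ∩ {y | f w < y.2}) := by
      ext y; simp [hA]
    rw [this]
    refine isOpen_iUnion fun w => IsOpen.inter (isOpen_iInter_of_finite fun i => ?_) ?_
    · exact isOpen_lt continuous_const (by fun_prop)
    · exact isOpen_lt continuous_const (by fun_prop)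
  have hnot : ((0 : ι → ℝ), p) ∉ A := by
    rintro ⟨w, h1, h2⟩
    have := hp w (fun i => (h1 i).le)
    simp only at h2
    linarith
  obtain ⟨φ, hφ⟩ := geometric_hahn_banach_point_open hconv hopen hnot
  set α : ι → ℝ := fun i => φ (Pi.single i 1, 0) with hα
  set β : ℝ := φ (0, 1) with hβ
  have hrep : ∀ (a : ι → ℝ) (c : ℝ), φ (a, c) = ∑ i, α i * a i + β * c := by
    intro a c
    have e : ((a, c) : (ι → ℝ) × ℝ)
        = ∑ i, a i • ((Pi.single i 1, 0) : (ι → ℝ) × ℝ) + c • ((0, 1) : (ι → ℝ) × ℝ) := by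
      ext j
      · simp [Prod.fst_sum, Finset.sum_apply, Pi.single_apply]
      · simp [Prod.snd_sum]
    rw [e, map_add, map_sum]
    simp only [map_smul, smul_eq_mul, hα, hβ]
    congr 1
    · exact Finset.sum_congr rfl fun i _ => mul_comm _ _
    · exact mul_comm _ _
  have hlt : ∀ (a : ι → ℝ) (c : ℝ) (w : E), (∀ i, g i w < a i) → f w < c →
      β * p < ∑ i, α i * a i + β * c := by
    intro a c w h1 h2
    have := hφ (a, c) ⟨w, h1, h2⟩
    rw [hrep, hrep] at this
    simpa using this
  have hβpos : 0 < β := by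
    have := hlt 0 (max (f w0) p + 1) w0 (by simpa using hw0) (by linarith [le_max_left (f w0) p])
    simp at this
    nlinarith [le_max_right (f w0) p]
  have hαnn : ∀ i, 0 ≤ α i := by
    intro i
    by_contra hneg
    push Not at hneg
    set M := β * (f w0 + 1) - β * p
    have hM : ∀ t : ℝ, 0 ≤ t → 0 < α i * t + M := by
      intro t ht
      have := hlt (Pi.single i t) (f w0 + 1) w0 (fun j => (hw0 j).trans_le (by
        by_cases hj : j = i
        · subst hj; simpa using ht
        · simp [hj])) (by linarith)
      simp [Pi.single_apply] at this
      simp only [M]; linarith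
    have h0 := hM 0 le_rfl
    have h1 := hM (M / (-α i)) (div_nonneg (by linarith) (by linarith))
    have : α i * (M / (-α i)) = -M := by
      rw [div_neg, mul_neg, mul_div_cancel₀ _ hneg.ne]
    linarith
  refine ⟨fun i => α i / β, fun i => div_nonneg (hαnn i) hβpos.le, fun w => ?_⟩
  have h1 : β * p ≤ ∑ i, α i * g i w + β * f w := by
    refine le_of_forall_pos_lt_add fun ε hε => ?_
    set T := ∑ i, α i + β
    have hT : 0 < T := by
      have : 0 ≤ ∑ i, α i := Finset.sum_nonneg fun i _ => hαnn i
      simp only [T]; linarith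
    have := hlt (fun i => g i w + ε / T) (f w + ε / T) w
      (fun i => by have := div_pos hε hT; linarith) (by have := div_pos hε hT; linarith)
    have e : ∑ i, α i * (g i w + ε / T) + β * (f w + ε / T)
        = ∑ i, α i * g i w + β * f w + T * (ε / T) := by
      simp only [mul_add, Finset.sum_add_distrib, ← Finset.sum_mul, T]; ring
    rw [e, mul_div_cancel₀ _ hT.ne'] at this
    exact this
  have h2 : β * (f w + ∑ i, α i / β * g i w) = ∑ i, α i * g i w + β * f w := by
    rw [mul_add, Finset.mul_sum, add_comm]
    congr 1
    refine Finset.sum_congr rfl fun i _ => ?_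
    field_simp
  rw [← h2] at h1
  exact le_of_mul_le_mul_left h1 hβpos

theorem e2norm_nn {d : ℕ} (x : Fin d → ℝ) : 0 ≤ e2norm x := Real.sqrt_nonneg _

theorem e2norm_sq {d : ℕ} (x : Fin d → ℝ) : e2norm x ^ 2 = ∑ i, x i ^ 2 :=
  Real.sq_sqrt (Finset.sum_nonneg fun i _ => sq_nonneg _)

theorem e2norm_eq {d : ℕ} (x : Fin d → ℝ) : e2norm x = ‖(WithLp.toLp 2 x : EuclideanSpace ℝ (Fin d))‖ := by
  simp [e2norm, EuclideanSpace.norm_eq]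

theorem psi_conv {d : ℕ} (σ : ℝ) (u v : Fin d → ℝ) (a b : ℝ) (ha : 0 ≤ a) (hb : 0 ≤ b)
    (hab : a + b = 1) : Real.sqrt (e2norm (a • u + b • v) ^ 2 + σ ^ 2)
      ≤ a * Real.sqrt (e2norm u ^ 2 + σ ^ 2) + b * Real.sqrt (e2norm v ^ 2 + σ ^ 2) := by
  have key : ∀ w : Fin d → ℝ, Real.sqrt (e2norm w ^ 2 + σ ^ 2) =
      ‖(WithLp.toLp 2 (Fin.cons σ w : Fin (d+1) → ℝ) : EuclideanSpace ℝ (Fin (d+1)))‖ := by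
    intro w
    rw [← e2norm_eq, e2norm_sq, e2norm, Fin.sum_univ_succ]
    simp [add_comm]
  rw [key, key, key]
  have e : (WithLp.toLp 2 (Fin.cons σ (a • u + b • v) : Fin (d+1) → ℝ) : EuclideanSpace ℝ (Fin (d+1)))
      = a • WithLp.toLp 2 (Fin.cons σ u : Fin (d+1) → ℝ) + b • WithLp.toLp 2 (Fin.cons σ v : Fin (d+1) → ℝ) := by
    ext i
    refine Fin.cases ?_ (fun j => ?_) i
    · simp; rw [← add_mul, hab, one_mul]
    · simp
  rw [e]
  refine (norm_add_le _ _).trans ?_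
  rw [norm_smul, norm_smul, Real.norm_of_nonneg ha, Real.norm_of_nonneg hb]

theorem cs_lower {d : ℕ} (c w : Fin d → ℝ) : -(e2norm c * e2norm w) ≤ ∑ i, c i * w i := by
  have h := Finset.sum_mul_sq_le_sq_mul_sq Finset.univ c w
  rw [← e2norm_sq, ← e2norm_sq, ← mul_pow] at h
  exact (abs_le_of_sq_le_sq' h (mul_nonneg (e2norm_nn _) (e2norm_nn _))).1

theorem tail_eq {n k : ℕ} (lam xt : Fin n → ℝ) (hxt : kSparseNonneg n k xt) :
    tailSum k lam xt = ∑ i, lam i * xt i := by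
  unfold tailSum
  refine Finset.sum_subset (Finset.filter_subset _ _) fun i _ hi => ?_
  simp at hi
  rw [hxt.1 i (by omega), mul_zero]

theorem weak_dual {n k : ℕ} (xt : Fin n → ℝ) (hxt : kSparseNonneg n k xt)
    (σ Cw G : ℝ) (hσ : 0 < σ) (hCw : 0 < Cw) (hG : 0 ≤ G) (h w lam : Fin n → ℝ) (ν γ : ℝ)
    (hw1 : e2norm w ≤ Cw) (hw2 : l1norm (xt + w) ≤ l1norm xt)
    (hν : 0 ≤ ν) (hlam : ∀ i, 0 ≤ lam i ∧ lam i ≤ 2 * ν) (hγ : 0 ≤ γ)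
    (hK : e2norm (fun i => h i + ν - lam i) ≤ G + γ) :
    σ * Real.sqrt ((G + γ) ^ 2 - e2norm (fun i => h i + ν - lam i) ^ 2)
      - tailSum k lam xt - γ * Real.sqrt (Cw ^ 2 + σ ^ 2)
    ≤ Real.sqrt (e2norm w ^ 2 + σ ^ 2) * G + ∑ i, h i * w i := by
  rw [tail_eq lam xt hxt]
  have hcs := cs_lower (fun i => h i + ν - lam i) w
  set N := e2norm (fun i => h i + ν - lam i) with hN
  have hN0 : 0 ≤ N := e2norm_nn _
  have hW0 := e2norm_nn w
  set W := e2norm w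
  have h1 : ∑ i, (ν - lam i) * w i ≤ ∑ i, lam i * xt i := by
    have a1 : ∑ i, (ν - lam i) * (xt i + w i) ≤ ν * l1norm (xt + w) := by
      rw [l1norm, Finset.mul_sum]
      refine Finset.sum_le_sum fun i _ => ?_
      have : |ν - lam i| ≤ ν := abs_le.2 ⟨by linarith [hlam i], by linarith [hlam i]⟩
      calc _ ≤ |(ν - lam i) * (xt i + w i)| := le_abs_self _
        _ = |ν - lam i| * |xt i + w i| := abs_mul _ _
        _ ≤ _ := mul_le_mul_of_nonneg_right this (abs_nonneg _)
    have a2 : ν * l1norm (xt + w) ≤ ν * l1norm xt := mul_le_mul_of_nonneg_left hw2 hν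
    have a3 : ν * l1norm xt = ∑ i, ν * xt i := by
      rw [l1norm, Finset.mul_sum]
      exact Finset.sum_congr rfl fun i _ => by rw [abs_of_nonneg (hxt.2 i)]
    have a4 : ∑ i, (ν - lam i) * (xt i + w i)
        = ∑ i, (ν - lam i) * w i + ∑ i, ν * xt i - ∑ i, lam i * xt i := by
      rw [← Finset.sum_add_distrib, ← Finset.sum_sub_distrib]
      exact Finset.sum_congr rfl fun i _ => by ring
    linarith
  have h2 : ∑ i, (h i + ν - lam i) * w i = ∑ i, h i * w i + ∑ i, (ν - lam i) * w i := by
    rw [← Finset.sum_add_distrib]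
    exact Finset.sum_congr rfl fun i _ => by ring
  have h3 : Real.sqrt (W ^ 2 + σ ^ 2) ≤ Real.sqrt (Cw ^ 2 + σ ^ 2) :=
    Real.sqrt_le_sqrt (by nlinarith)
  have h3' := mul_le_mul_of_nonneg_left h3 hγ
  have hD0 := Real.sqrt_nonneg ((G + γ) ^ 2 - N ^ 2)
  have hD2 : Real.sqrt ((G + γ) ^ 2 - N ^ 2) ^ 2 = (G + γ) ^ 2 - N ^ 2 := Real.sq_sqrt (by nlinarith)
  set D := Real.sqrt ((G + γ) ^ 2 - N ^ 2)
  have hP0 := Real.sqrt_nonneg (W ^ 2 + σ ^ 2)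
  have hP2 : Real.sqrt (W ^ 2 + σ ^ 2) ^ 2 = W ^ 2 + σ ^ 2 := Real.sq_sqrt (by positivity)
  set P := Real.sqrt (W ^ 2 + σ ^ 2)
  have h4 : N * W + σ * D ≤ (G + γ) * P := by
    refine abs_le_of_sq_le_sq' ?_ (by positivity) |>.2
    have : (G + γ) ^ 2 = N ^ 2 + D ^ 2 := by linarith
    rw [mul_pow, this, hP2]
    nlinarith [sq_nonneg (N * σ - D * W)]
  linarith

theorem inner_min {d : ℕ} (c : Fin d → ℝ) (K σ q : ℝ) (hK : 0 ≤ K) (hσ : 0 < σ)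
    (hq : ∀ w : Fin d → ℝ, q ≤ K * Real.sqrt (e2norm w ^ 2 + σ ^ 2) + ∑ i, c i * w i) :
    e2norm c ≤ K ∧ q ≤ σ * Real.sqrt (K ^ 2 - e2norm c ^ 2) := by
  have hN0 := e2norm_nn c
  have ht : ∀ t : ℝ, q ≤ K * Real.sqrt (t ^ 2 * e2norm c ^ 2 + σ ^ 2) - t * e2norm c ^ 2 := by
    intro t
    have := hq (fun i => -t * c i)
    have e1 : e2norm (fun i => -t * c i) ^ 2 = t ^ 2 * e2norm c ^ 2 := by
      rw [e2norm_sq, e2norm_sq, Finset.mul_sum]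
      exact Finset.sum_congr rfl fun i _ => by ring
    have e2 : ∑ i, c i * (-t * c i) = - (t * e2norm c ^ 2) := by
      rw [e2norm_sq, Finset.mul_sum, ← Finset.sum_neg_distrib]
      exact Finset.sum_congr rfl fun i _ => by ring
    rw [e1, e2] at this
    linarith
  set N := e2norm c
  have hNK : N ≤ K := by
    by_contra hlt
    push Not at hlt
    have hNp : 0 < N := by linarith
    have hpos : 0 < N * (N - K) := mul_pos hNp (by linarith)
    have hb : ∀ t : ℝ, 0 ≤ t → q ≤ K * σ - t * (N * (N - K)) := by
      intro t h0
      have h1 : Real.sqrt (t ^ 2 * N ^ 2 + σ ^ 2) ≤ t * N + σ := by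
        refine Real.sqrt_le_iff.2 ⟨by positivity, ?_⟩
        have : 0 ≤ t * N * σ := by positivity
        nlinarith
      nlinarith [ht t, mul_le_mul_of_nonneg_left h1 hK]
    have h0 := hb 0 le_rfl
    have h1 := hb ((K * σ - q + 1) / (N * (N - K))) (div_nonneg (by linarith) hpos.le)
    rw [div_mul_cancel₀ _ hpos.ne'] at h1
    linarith
  refine ⟨hNK, ?_⟩
  rcases hNK.eq_or_lt with he | hlt
  · rw [he, sub_self, Real.sqrt_zero, mul_zero]
    rcases hK.eq_or_lt with hK0 | hKp
    · have := ht 0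
      rw [← hK0] at this; simpa using this
    · refine le_of_forall_pos_le_add fun ε hε => ?_
      have htp : 0 < σ ^ 2 / (2 * ε) := by positivity
      have h2 := ht (σ ^ 2 / (2 * ε))
      have e : ε = σ ^ 2 / (2 * (σ ^ 2 / (2 * ε))) := by field_simp
      set t := σ ^ 2 / (2 * ε)
      rw [he] at h2
      have h1 : Real.sqrt (t ^ 2 * K ^ 2 + σ ^ 2) ≤ t * K + σ ^ 2 / (2 * t * K) := by
        refine Real.sqrt_le_iff.2 ⟨by positivity, ?_⟩
        have : (t * K + σ ^ 2 / (2 * t * K)) ^ 2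
            = t ^ 2 * K ^ 2 + σ ^ 2 + (σ ^ 2 / (2 * t * K)) ^ 2 := by
          field_simp; ring
        rw [this]; nlinarith [sq_nonneg (σ ^ 2 / (2 * t * K))]
      have h3 := mul_le_mul_of_nonneg_left h1 hK
      have h4 : K * (t * K + σ ^ 2 / (2 * t * K)) = t * K ^ 2 + σ ^ 2 / (2 * t) := by
        field_simp
      rw [← e] at h4
      linarith
  · have hDp : 0 < Real.sqrt (K ^ 2 - N ^ 2) := Real.sqrt_pos.2 (by nlinarith)
    have hD2 : Real.sqrt (K ^ 2 - N ^ 2) ^ 2 = K ^ 2 - N ^ 2 := Real.sq_sqrt (by nlinarith)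
    set D := Real.sqrt (K ^ 2 - N ^ 2)
    have h1 := ht (σ / D)
    have e : Real.sqrt ((σ / D) ^ 2 * N ^ 2 + σ ^ 2) = σ * K / D := by
      have e0 : (σ / D) ^ 2 * N ^ 2 + σ ^ 2 = (σ * K / D) ^ 2 := by
        field_simp
        linarith
      rw [e0, Real.sqrt_sq (by positivity)]
    rw [e] at h1
    have e2 : K * (σ * K / D) - σ / D * N ^ 2 = σ * D := by
      field_simp
      linarith
    linarith

theorem lasso_stmt3 (m n k : ℕ) (hn : 1 ≤ n) (hk1 : 1 ≤ k) (hkn : k ≤ n)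
    (xt : Fin n → ℝ) (hxt : kSparseNonneg n k xt) (hxt0 : xt ≠ 0)
    (σ Cw : ℝ) (hσ : 0 < σ) (hCw : 0 < Cw)
    (g : Fin m → ℝ) (h : Fin n → ℝ) :
    sInf ((fun w : Fin n → ℝ =>
        Real.sqrt (e2norm w ^ 2 + σ ^ 2) * e2norm g + ∑ i, h i * w i) ''
      {w : Fin n → ℝ | e2norm w ≤ Cw ∧ l1norm (xt + w) ≤ l1norm xt})
    = sSup {z : ℝ | ∃ ν : ℝ, ∃ lam : Fin n → ℝ, ∃ γ : ℝ,
        0 ≤ ν ∧ (∀ i, 0 ≤ lam i ∧ lam i ≤ 2 * ν) ∧ 0 ≤ γ ∧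
        e2norm (fun i => h i + ν - lam i) ≤ e2norm g + γ ∧
        z = σ * Real.sqrt ((e2norm g + γ) ^ 2
              - e2norm (fun i => h i + ν - lam i) ^ 2)
            - tailSum k lam xt - γ * Real.sqrt (Cw ^ 2 + σ ^ 2)} := by
  have hG := e2norm_nn g
  set G := e2norm g
  set S := ((fun w : Fin n → ℝ =>
        Real.sqrt (e2norm w ^ 2 + σ ^ 2) * G + ∑ i, h i * w i) ''
      {w : Fin n → ℝ | e2norm w ≤ Cw ∧ l1norm (xt + w) ≤ l1norm xt}) with hS
  set T := {z : ℝ | ∃ ν : ℝ, ∃ lam : Fin n → ℝ, ∃ γ : ℝ,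
        0 ≤ ν ∧ (∀ i, 0 ≤ lam i ∧ lam i ≤ 2 * ν) ∧ 0 ≤ γ ∧
        e2norm (fun i => h i + ν - lam i) ≤ G + γ ∧
        z = σ * Real.sqrt ((G + γ) ^ 2
              - e2norm (fun i => h i + ν - lam i) ^ 2)
            - tailSum k lam xt - γ * Real.sqrt (Cw ^ 2 + σ ^ 2)} with hT
  have hweak : ∀ z ∈ T, ∀ s ∈ S, z ≤ s := by
    rintro z ⟨ν, lam, γ, hν, hlam, hγ, hK, rfl⟩ s ⟨w, ⟨hw1, hw2⟩, rfl⟩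
    exact weak_dual xt hxt σ Cw G hσ hCw hG h w lam ν γ hw1 hw2 hν hlam hγ hK
  have hSne : S.Nonempty := by
    refine ⟨_, 0, ⟨?_, ?_⟩, rfl⟩
    · simp [e2norm, hCw.le]
    · simp
  have hTne : T.Nonempty := by
    refine ⟨_, 0, 0, e2norm h, le_rfl, by simp, e2norm_nn h, ?_, rfl⟩
    simp [hG]
  have hSb : BddBelow S := hTne.imp fun z hz => fun s hs => hweak z hz s hs
  have hTb : BddAbove T := hSne.imp fun s hs => fun z hz => hweak z hz s hs
  refine le_antisymm ?_ (csSup_le hTne fun z hz => le_csInf hSne fun s hs => hweak z hz s hs)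
  suffices ∃ z ∈ T, sInf S ≤ z by
    obtain ⟨z, hz, hle⟩ := this
    exact hle.trans (le_csSup hTb hz)
  set p := sInf S with hp
  have hx1 : l1norm xt = ∑ i, xt i :=
    Finset.sum_congr rfl fun i _ => abs_of_nonneg (hxt.2 i)
  have hXpos : 0 < ∑ i, xt i := by
    obtain ⟨i, hi⟩ := Function.ne_iff.1 hxt0
    exact Finset.sum_pos' (fun i _ => hxt.2 i)
      ⟨i, Finset.mem_univ _, lt_of_le_of_ne (hxt.2 i) (Ne.symm hi)⟩
  have hnpos : (0 : ℝ) < n := by exact_mod_cast hn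
  -- Slater point
  obtain ⟨ε, hε0, hε1, hεC⟩ : ∃ ε : ℝ, 0 < ε ∧ ε < 1 ∧ ε * e2norm xt < Cw := by
    have hx0 := e2norm_nn xt
    refine ⟨min (1/2) (Cw / (e2norm xt + 1)), by positivity, ?_, ?_⟩
    · exact (min_le_left _ _).trans_lt (by norm_num)
    · calc _ ≤ Cw / (e2norm xt + 1) * e2norm xt :=
            mul_le_mul_of_nonneg_right (min_le_right _ _) hx0
        _ < Cw := by
            rw [div_mul_eq_mul_div, div_lt_iff₀ (by positivity)]
            nlinarith
  set X := ∑ i, xt i with hX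
  set δ := ε * X / (2 * n) with hδ
  have hδ0 : 0 < δ := by positivity
  let F : (Fin n → ℝ) × (Fin n → ℝ) → ℝ := fun y =>
    Real.sqrt (e2norm y.1 ^ 2 + σ ^ 2) * G + ∑ i, h i * y.1 i
  let Q : (Fin n ⊕ Fin n) ⊕ (Unit ⊕ Unit) → (Fin n → ℝ) × (Fin n → ℝ) → ℝ := fun j y =>
    Sum.elim (Sum.elim (fun i => xt i + y.1 i - y.2 i) (fun i => -(xt i + y.1 i) - y.2 i))
      (Sum.elim (fun _ => ∑ i, y.2 i - X)
        (fun _ => Real.sqrt (e2norm y.1 ^ 2 + σ ^ 2) - Real.sqrt (Cw ^ 2 + σ ^ 2))) j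
  obtain ⟨μ, hμ, hL⟩ := lag_dual F Q (by
      intro u v a b ha hb hab
      have h1 := psi_conv σ u.1 v.1 a b ha hb hab
      have h2 := mul_le_mul_of_nonneg_right h1 hG
      have h3 : ∑ i, h i * (a • u + b • v).1 i = a * ∑ i, h i * u.1 i + b * ∑ i, h i * v.1 i := by
        rw [Finset.mul_sum, Finset.mul_sum, ← Finset.sum_add_distrib]
        exact Finset.sum_congr rfl fun i _ => by simp; ring
      simp only [F, h3]
      simp only [Prod.fst_add, Prod.smul_fst]
      linarith) (by
      rintro ((i | i) | (i | i)) u v a b ha hb hab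
      · simp only [Q, Sum.elim_inl, Sum.elim_inr]
        simp
        apply le_of_eq
        linear_combination (-(xt i)) * hab
      · simp only [Q, Sum.elim_inl, Sum.elim_inr]
        simp
        apply le_of_eq
        linear_combination ((xt i)) * hab
      · simp only [Q, Sum.elim_inl, Sum.elim_inr]
        simp [Finset.sum_add_distrib, ← Finset.mul_sum]
        apply le_of_eq
        linear_combination X * hab
      · simp only [Q, Sum.elim_inl, Sum.elim_inr]
        have h1 := psi_conv σ u.1 v.1 a b ha hb hab
        simp only [Prod.fst_add, Prod.smul_fst]
        have : Real.sqrt (Cw ^ 2 + σ ^ 2) = (a + b) * Real.sqrt (Cw ^ 2 + σ ^ 2) := by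
          rw [hab, one_mul]
        linarith)
      ((fun i => -ε * xt i), (fun i => (1 - ε) * xt i + δ)) (by
      rintro ((i | i) | (i | i))
      · simp only [Q, Sum.elim_inl, Sum.elim_inr]
        linarith
      · simp only [Q, Sum.elim_inl, Sum.elim_inr]
        nlinarith [hxt.2 i, mul_nonneg (sub_nonneg.2 hε1.le) (hxt.2 i)]
      · simp only [Q, Sum.elim_inl, Sum.elim_inr]
        rw [Finset.sum_add_distrib, ← Finset.mul_sum]
        simp only [Finset.sum_const, Finset.card_univ, Fintype.card_fin, nsmul_eq_mul]
        have : (n : ℝ) * δ = ε * X / 2 := by rw [hδ]; field_simp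
        rw [this, ← hX]
        nlinarith [mul_pos hε0 hXpos]
      · simp only [Q, Sum.elim_inl, Sum.elim_inr]
        have e1 : e2norm (fun i => -ε * xt i) ^ 2 = (ε * e2norm xt) ^ 2 := by
          rw [mul_pow, e2norm_sq, e2norm_sq, Finset.mul_sum]
          exact Finset.sum_congr rfl fun i _ => by ring
        rw [e1]
        have := e2norm_nn xt
        have : Real.sqrt ((ε * e2norm xt) ^ 2 + σ ^ 2) < Real.sqrt (Cw ^ 2 + σ ^ 2) :=
          Real.sqrt_lt_sqrt (by positivity) (by
            have := pow_lt_pow_left₀ hεC (by positivity) two_ne_zero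
            linarith)
        linarith) p (by
      rintro ⟨w, u⟩ hw
      refine csInf_le hSb ⟨w, ⟨?_, ?_⟩, rfl⟩
      · have := hw (Sum.inr (Sum.inr ()))
        simp only [Q, Sum.elim_inl, Sum.elim_inr] at this
        have h2 := (Real.sqrt_le_sqrt_iff (by positivity)).1 (sub_nonpos.1 this)
        exact (abs_le_of_sq_le_sq' (by linarith) hCw.le).2
      · have h0 := hw (Sum.inr (Sum.inl ()))
        simp only [Q, Sum.elim_inl, Sum.elim_inr] at h0
        rw [hx1]
        refine le_trans (Finset.sum_le_sum fun i _ => ?_) (sub_nonpos.1 h0)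
        have h1 := hw (Sum.inl (Sum.inl i))
        have h2 := hw (Sum.inl (Sum.inr i))
        simp only [Q, Sum.elim_inl, Sum.elim_inr] at h1 h2
        exact abs_le.2 ⟨by simp; linarith, by simp; linarith⟩)
  set A : Fin n → ℝ := fun i => μ (Sum.inl (Sum.inl i)) with hA
  set B : Fin n → ℝ := fun i => μ (Sum.inl (Sum.inr i)) with hB
  set ν := μ (Sum.inr (Sum.inl ())) with hν
  set γ := μ (Sum.inr (Sum.inr ())) with hγ
  have hA0 : ∀ i, 0 ≤ A i := fun i => hμ _
  have hB0 : ∀ i, 0 ≤ B i := fun i => hμ _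
  have hν0 : 0 ≤ ν := hμ _
  have hγ0 : 0 ≤ γ := hμ _
  have hL' : ∀ w u : Fin n → ℝ, p ≤ (G + γ) * Real.sqrt (e2norm w ^ 2 + σ ^ 2)
      + ∑ i, (h i + A i - B i) * w i + ∑ i, (A i - B i) * xt i - ν * X
      - γ * Real.sqrt (Cw ^ 2 + σ ^ 2) + ∑ i, (ν - A i - B i) * u i := by
    intro w u
    have := hL (w, u)
    simp only [Fintype.sum_sum_type, F, Q, Sum.elim_inl, Sum.elim_inr, Finset.univ_unique,
      Finset.sum_singleton] at this
    refine this.trans (le_of_eq ?_)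
    have e1 : ∑ i, A i * (xt i + w i - u i) + ∑ i, B i * (-(xt i + w i) - u i)
        + ν * ∑ i, u i + ∑ i, h i * w i
        = ∑ i, (h i + A i - B i) * w i + ∑ i, (A i - B i) * xt i + ∑ i, (ν - A i - B i) * u i := by
      rw [Finset.mul_sum]
      simp only [← Finset.sum_add_distrib]
      exact Finset.sum_congr rfl fun i _ => by ring
    change _ + (_ + _ + (ν * (_ - X) + γ * _)) = _
    linarith
  have hAB : ∀ i, A i = ν - B i := by
    intro i
    by_contra hne
    have hr : ν - A i - B i ≠ 0 := fun h0 => hne (by linarith)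
    have h0 := hL' 0
    set M := (G + γ) * Real.sqrt (e2norm (0 : Fin n → ℝ) ^ 2 + σ ^ 2)
      + ∑ i, (h i + A i - B i) * (0 : Fin n → ℝ) i + ∑ i, (A i - B i) * xt i - ν * X
      - γ * Real.sqrt (Cw ^ 2 + σ ^ 2)
    have := h0 (Pi.single i ((p - M - 1) / (ν - A i - B i)))
    simp only [Pi.single_apply, mul_ite, mul_zero, Finset.sum_ite_eq', Finset.mem_univ,
      if_true] at this
    rw [mul_div_cancel₀ _ hr] at this
    linarith
  have hfin := inner_min (fun i => h i + ν - 2 * B i) (G + γ) σ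
    (p + tailSum k (fun i => 2 * B i) xt + γ * Real.sqrt (Cw ^ 2 + σ ^ 2)) (by positivity) hσ (by
      intro w
      have h1 := hL' w 0
      rw [tail_eq _ xt hxt]
      have e1 : ∑ i, (h i + A i - B i) * w i = ∑ i, (h i + ν - 2 * B i) * w i :=
        Finset.sum_congr rfl fun i _ => by rw [hAB i]; ring
      have e2 : ∑ i, (A i - B i) * xt i = ν * X - ∑ i, 2 * B i * xt i := by
        rw [hX, Finset.mul_sum, ← Finset.sum_sub_distrib]
        exact Finset.sum_congr rfl fun i _ => by rw [hAB i]; ring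
      have e3 : ∑ i, (ν - A i - B i) * (0 : Fin n → ℝ) i = 0 := by simp
      linarith)
  refine ⟨_, ⟨ν, fun i => 2 * B i, γ, hν0, fun i => ⟨?_, ?_⟩, hγ0, hfin.1, rfl⟩, ?_⟩
  · linarith [hB0 i]
  · linarith [hA0 i, hAB i]
  · linarith [hfin.2]
end

section
/- Fix integers n ≥ 1 and k with 1 ≤ k ≤ n, let x̃ ∈ ℝⁿ be k-sparse nonnegative, σ > 0, g ∈ ℝᵐ and h ∈ ℝⁿ. Suppose ν̂ ≥ 0 and λ̂ ∈ ℝⁿ with 0 ≤ λ̂_i ≤ 2ν̂ for all i attain the supremum defining ξ_ov(σ, g, h, x̃), write Ĥ = ‖h + ν̂·1 − λ̂‖₂ ≤ ‖g‖₂, and suppose H_gen(g, h) < ‖g‖₂. Then Ĥ ≤ H_gen(g, h), and consequently σ·Ĥ/√(‖g‖₂² − Ĥ²) ≤ σ·H_gen(g, h)/√(‖g‖₂² − H_gen(g, h)²). In other words, the norm of the LASSO error vector for any k-sparse nonnegative x̃ is dominated by the 'generic' (worst-case, infinite-magnitude) error norm. -/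
/-- The constraint set of the "overwhelming" optimization ξ_ov. -/
def xiOvSet (m n k : ℕ) (σ : ℝ) (xt : Fin n → ℝ) (g : Fin m → ℝ) (h : Fin n → ℝ) :
    Set ℝ :=
  {z : ℝ | ∃ ν : ℝ, ∃ lam : Fin n → ℝ, 0 ≤ ν ∧
    (∀ i, 0 ≤ lam i ∧ lam i ≤ 2 * ν) ∧
    e2norm (fun i => h i + ν - lam i) ≤ e2norm g ∧
    z = σ * Real.sqrt (e2norm g ^ 2 - e2norm (fun i => h i + ν - lam i) ^ 2)
        - tailSum k lam xt}

/-- H_gen(g, h): the generic (infinite-magnitude) optimal value (2.110). -/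
noncomputable def HgenFun (m n k : ℕ) (g : Fin m → ℝ) (h : Fin n → ℝ) : ℝ :=
  sInf {y : ℝ | ∃ ν : ℝ, ∃ lam : Fin n → ℝ, 0 ≤ ν ∧
    (∀ i : Fin n, n - k ≤ (i : ℕ) → lam i = 0) ∧
    (∀ i : Fin n, (i : ℕ) < n - k → 0 ≤ lam i ∧ lam i ≤ 2 * ν) ∧
    y = e2norm (fun i => h i + ν - lam i)}

theorem lasso_stmt8 (m n k : ℕ) (hn : 1 ≤ n) (hk1 : 1 ≤ k) (hkn : k ≤ n)
    (xt : Fin n → ℝ) (hxt : kSparseNonneg n k xt)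
    (σ : ℝ) (hσ : 0 < σ) (g : Fin m → ℝ) (h : Fin n → ℝ)
    (νh : ℝ) (lamh : Fin n → ℝ)
    (hνh : 0 ≤ νh) (hlamh : ∀ i, 0 ≤ lamh i ∧ lamh i ≤ 2 * νh)
    (hHg : e2norm (fun i => h i + νh - lamh i) ≤ e2norm g)
    (hmax : IsGreatest (xiOvSet m n k σ xt g h)
      (σ * Real.sqrt (e2norm g ^ 2 - e2norm (fun i => h i + νh - lamh i) ^ 2)
        - tailSum k lamh xt))
    (hgen : HgenFun m n k g h < e2norm g) :
    e2norm (fun i => h i + νh - lamh i) ≤ HgenFun m n k g h ∧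
    σ * e2norm (fun i => h i + νh - lamh i) /
        Real.sqrt (e2norm g ^ 2 - e2norm (fun i => h i + νh - lamh i) ^ 2)
      ≤ σ * HgenFun m n k g h /
        Real.sqrt (e2norm g ^ 2 - HgenFun m n k g h ^ 2) := by
  have hnn : ∀ {d : ℕ} (x : Fin d → ℝ), 0 ≤ e2norm x := fun x => Real.sqrt_nonneg _
  have htail : 0 ≤ tailSum k lamh xt :=
    Finset.sum_nonneg fun i _ => mul_nonneg (hlamh i).1 (hxt.2 i)
  have key : e2norm (fun i => h i + νh - lamh i) ≤ HgenFun m n k g h := by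
    unfold HgenFun
    apply le_csInf
    · exact ⟨_, 0, fun _ => 0, le_refl _, fun _ _ => rfl, fun _ _ => by simp, rfl⟩
    · rintro y ⟨ν, lam, hν, h0, hl, rfl⟩
      rcases le_total (e2norm g) (e2norm (fun i => h i + ν - lam i)) with hc | hc
      · exact hHg.trans hc
      · have hz : tailSum k lam xt = 0 := by
          unfold tailSum
          apply Finset.sum_eq_zero
          intro i hi
          rw [h0 i (Finset.mem_filter.mp hi).2, zero_mul]
        have hf : ∀ i, 0 ≤ lam i ∧ lam i ≤ 2 * ν := by
          intro i
          rcases lt_or_ge (i : ℕ) (n - k) with hi | hi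
          · exact hl i hi
          · rw [h0 i hi]
            exact ⟨le_refl _, by positivity⟩
        have hm := hmax.2 ⟨ν, lam, hν, hf, hc, rfl⟩
        rw [hz] at hm
        have h1 : Real.sqrt (e2norm g ^ 2 - e2norm (fun i => h i + ν - lam i) ^ 2) ≤
            Real.sqrt (e2norm g ^ 2 - e2norm (fun i => h i + νh - lamh i) ^ 2) :=
          le_of_mul_le_mul_left (by linarith) hσ
        have h2 : e2norm (fun i => h i + νh - lamh i) ^ 2 ≤ e2norm g ^ 2 :=
          pow_le_pow_left₀ (hnn _) hHg 2
        rw [Real.sqrt_le_sqrt_iff (by linarith)] at h1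
        exact abs_le_of_sq_le_sq (by linarith) (hnn _) |> (le_abs_self _).trans
  refine ⟨key, ?_⟩
  have hH0 : 0 ≤ HgenFun m n k g h := (hnn _).trans key
  have h3 : HgenFun m n k g h ^ 2 < e2norm g ^ 2 := pow_lt_pow_left₀ hgen hH0 (by norm_num)
  have h4 := pow_le_pow_left₀ (hnn _) key 2
  apply div_le_div₀ (mul_nonneg hσ.le hH0) (mul_le_mul_of_nonneg_left key hσ.le)
  · exact Real.sqrt_pos.mpr (by linarith)
  · exact Real.sqrt_le_sqrt (by linarith)
end

section
/- (Gordon's Gaussian comparison lemma.) Let m, n ≥ 1, let Φ ⊂ ℝⁿ be a nonempty compact set, and let ψ : ℝⁿ → ℝ be continuous. Let A be a random m×n matrix with i.i.d. standard normal N(0,1) entries, let g ∈ ℝᵐ and h ∈ ℝⁿ be random vectors with i.i.d. N(0,1) entries, and let γ be a standard normal random variable, all mutually independent. Then P( for all φ ∈ Φ: sup_{a ∈ ℝᵐ, ‖a‖₂ = 1} ( aᵀ·A·φ + ‖φ‖₂·γ − ψ(φ) ) ≥ 0 ) ≥ P( for all φ ∈ Φ: sup_{a ∈ ℝᵐ,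 ‖a‖₂ = 1} ( ‖φ‖₂·⟨g, a⟩ + ⟨h, φ⟩ − ψ(φ) ) ≥ 0 ). -/
open MeasureTheory ProbabilityTheory

/-- The product Gaussian measure on (A, g, h, γ). -/
noncomputable def muGordon (m n : ℕ) :
    Measure ((Fin m → Fin n → ℝ) × ((Fin m → ℝ) × ((Fin n → ℝ) × ℝ))) :=
  (Measure.pi fun _ : Fin m => Measure.pi fun _ : Fin n => gaussianReal 0 1).prod
    ((Measure.pi fun _ : Fin m => gaussianReal 0 1).prod
      ((Measure.pi fun _ : Fin n => gaussianReal 0 1).prod (gaussianReal 0 1)))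

namespace Gordon

set_option linter.unusedSectionVars false

section nice
variable {E F : Type*} [NormedAddCommGroup E] [NormedSpace ℝ E]
  [NormedAddCommGroup F] [NormedSpace ℝ F]

/-- C¹, bounded with bounded derivative. -/
def Nice (G : E → ℝ) : Prop :=
  ContDiff ℝ 1 G ∧ ∃ C, ∀ x, |G x| ≤ C ∧ ‖fderiv ℝ G x‖ ≤ C

lemma Nice.diff {G : E → ℝ} (h : Nice G) : Differentiable ℝ G :=
  h.1.differentiable one_ne_zero

lemma Nice.cont {G : E → ℝ} (h : Nice G) : Continuous G := h.1.continuous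

lemma Nice.cont_fderiv {G : E → ℝ} (h : Nice G) : Continuous (fderiv ℝ G) :=
  h.1.continuous_fderiv one_ne_zero

lemma nice_const (c : ℝ) : Nice (fun _ : E => c) :=
  ⟨contDiff_const, |c|, fun x => by simp⟩

lemma Nice.mul {G H : E → ℝ} (hG : Nice G) (hH : Nice H) : Nice (fun x => G x * H x) := by
  obtain ⟨C, hC⟩ := hG.2
  obtain ⟨D, hD⟩ := hH.2
  refine ⟨hG.1.mul hH.1, C * D + C * D, fun x => ⟨?_, ?_⟩⟩
  · have hC0 : 0 ≤ C := (abs_nonneg _).trans (hC x).1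
    have hD0 : 0 ≤ D := (abs_nonneg _).trans (hD x).1
    rw [abs_mul]
    have := mul_le_mul (hC x).1 (hD x).1 (abs_nonneg _) hC0
    nlinarith [mul_nonneg hC0 hD0]
  · have hC0 : 0 ≤ C := (abs_nonneg _).trans (hC x).1
    have hD0 : 0 ≤ D := (abs_nonneg _).trans (hD x).1
    rw [fderiv_fun_mul (hG.diff x) (hH.diff x)]
    refine (norm_add_le _ _).trans (add_le_add ?_ ?_)
    · rw [norm_smul]
      exact mul_le_mul (hC x).1 (hD x).2 (norm_nonneg _) hC0
    · rw [norm_smul, mul_comm]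
      exact mul_le_mul (hC x).2 (hD x).1 (norm_nonneg _) hC0

lemma Nice.one_sub {G : E → ℝ} (hG : Nice G) : Nice (fun x => 1 - G x) := by
  obtain ⟨C, hC⟩ := hG.2
  refine ⟨contDiff_const.sub hG.1, 1 + C, fun x => ⟨?_, ?_⟩⟩
  · have := abs_le.1 (hC x).1
    rw [abs_le]; constructor <;> linarith
  · have := (hC x).2
    rw [fderiv_const_sub, norm_neg]; linarith

lemma nice_prod {ι : Type*} (s : Finset ι) {G : ι → E → ℝ} (hG : ∀ i, Nice (G i)) :
    Nice (fun x => ∏ i ∈ s, G i x) := by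
  classical
  induction s using Finset.induction_on with
  | empty => simpa using nice_const 1
  | insert a s ha ih => simpa [Finset.prod_insert ha] using (hG a).mul ih

lemma Nice.hasFDerivAt_aff {G : F → ℝ} (hG : Nice G) (L : E →L[ℝ] F) (c : F) (x : E) :
    HasFDerivAt (fun x => G (L x + c)) ((fderiv ℝ G (L x + c)).comp L) x :=
  HasFDerivAt.comp x (g := G) (hG.diff _).hasFDerivAt (L.hasFDerivAt.add_const c)

lemma Nice.comp_aff {G : F → ℝ} (hG : Nice G) (L : E →L[ℝ] F) (c : F) :
    Nice (fun x => G (L x + c)) := by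
  obtain ⟨C, hC⟩ := hG.2
  refine ⟨hG.1.comp (L.contDiff.add contDiff_const), C + C * ‖L‖, fun x => ?_⟩
  have hC0 : 0 ≤ C := (abs_nonneg _).trans (hC (L x + c)).1
  refine ⟨(hC _).1.trans (by nlinarith [norm_nonneg L]), ?_⟩
  rw [(hG.hasFDerivAt_aff L c x).fderiv]
  refine (ContinuousLinearMap.opNorm_comp_le _ _).trans ?_
  have := mul_le_mul_of_nonneg_right (hC (L x + c)).2 (norm_nonneg L)
  linarith

lemma nice_sigmoid : Nice Real.sigmoid := by
  refine ⟨contDiff_sigmoid.of_le (by simp), 1, fun x => ?_⟩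
  have h0 := Real.sigmoid_pos x
  have h1 := Real.sigmoid_lt_one x
  refine ⟨by rw [abs_le]; constructor <;> linarith, ?_⟩
  rw [← norm_deriv_eq_norm_fderiv, Real.deriv_sigmoid, Real.norm_eq_abs, abs_le]
  constructor <;> nlinarith

end nice

section stein
variable {E F : Type*} [NormedAddCommGroup E] [NormedSpace ℝ E]
  [NormedAddCommGroup F] [NormedSpace ℝ F]
  [MeasurableSpace E] [BorelSpace E] [SecondCountableTopology E]
  [MeasurableSpace F] [BorelSpace F] [SecondCountableTopology F]

/-- Gaussian integration by parts. -/
def Stein (μ : Measure E) (l : E →L[ℝ] ℝ) (v : E) : Prop :=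
  Integrable (fun x => l x) μ ∧
    ∀ G : E → ℝ, Nice G → ∫ x, l x * G x ∂μ = ∫ x, fderiv ℝ G x v ∂μ

lemma Nice.integrable_mul {μ : Measure E} {G l : E → ℝ} (hG : Nice G) (hl : Integrable l μ) :
    Integrable (fun x => l x * G x) μ := by
  obtain ⟨C, hC⟩ := hG.2
  exact hl.mul_bdd (c := C) hG.cont.aestronglyMeasurable (ae_of_all _ fun x => (hC x).1)

lemma Nice.integrable {μ : Measure E} [IsFiniteMeasure μ] {G : E → ℝ} (hG : Nice G) :
    Integrable G μ := by
  simpa using hG.integrable_mul (integrable_const (1 : ℝ))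

lemma Nice.integrable_fderiv {μ : Measure E} [IsFiniteMeasure μ] {G : E → ℝ} (hG : Nice G)
    (v : E) : Integrable (fun x => fderiv ℝ G x v) μ := by
  obtain ⟨C, hC⟩ := hG.2
  refine Integrable.of_bound (C := C * ‖v‖)
    (hG.cont_fderiv.clm_apply continuous_const).aestronglyMeasurable (ae_of_all _ fun x => ?_)
  exact (ContinuousLinearMap.le_opNorm _ _).trans
    (mul_le_mul_of_nonneg_right (hC x).2 (norm_nonneg v))

lemma stein_zero (μ : Measure E) : Stein μ 0 0 := by
  constructor
  · simp
  · intro G _; simp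

lemma Stein.add {μ : Measure E} [IsFiniteMeasure μ] {l l' : E →L[ℝ] ℝ} {v v' : E}
    (h : Stein μ l v) (h' : Stein μ l' v') : Stein μ (l + l') (v + v') := by
  refine ⟨h.1.add h'.1, fun G hG => ?_⟩
  simp only [add_apply, add_mul, map_add]
  rw [integral_add (hG.integrable_mul h.1) (hG.integrable_mul h'.1),
    integral_add (hG.integrable_fderiv _) (hG.integrable_fderiv _), h.2 G hG, h'.2 G hG]

lemma Stein.smul {μ : Measure E} {l : E →L[ℝ] ℝ} {v : E}
    (h : Stein μ l v) (c : ℝ) : Stein μ (c • l) (c • v) := by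
  refine ⟨h.1.const_mul c, fun G hG => ?_⟩
  simp only [smul_apply, smul_eq_mul, mul_assoc, map_smul]
  rw [integral_const_mul, integral_const_mul, h.2 G hG]

lemma stein_sum {μ : Measure E} [IsFiniteMeasure μ] {ι : Type*} (s : Finset ι)
    {l : ι → E →L[ℝ] ℝ} {v : ι → E}
    (h : ∀ i, Stein μ (l i) (v i)) : Stein μ (∑ i ∈ s, l i) (∑ i ∈ s, v i) := by
  classical
  induction s using Finset.induction_on with
  | empty => simpa using stein_zero μ
  | insert a s ha ih => simpa [Finset.sum_insert ha] using (h a).add ih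

lemma Stein.prod_left {μ : Measure E} {ν : Measure F} [IsProbabilityMeasure μ]
    [IsProbabilityMeasure ν] {l : E →L[ℝ] ℝ} {v : E} (h : Stein μ l v) :
    Stein (μ.prod ν) (l.comp (ContinuousLinearMap.fst ℝ E F)) (v, 0) := by
  have hi : Integrable (fun x : E × F => (l.comp (ContinuousLinearMap.fst ℝ E F)) x)
      (μ.prod ν) := by simpa using h.1.comp_fst ν
  refine ⟨hi, fun G hG => ?_⟩
  rw [integral_prod_symm _ (hG.integrable_mul hi), integral_prod_symm _ (hG.integrable_fderiv _)]
  congr 1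
  ext y
  have hN := hG.comp_aff (ContinuousLinearMap.inl ℝ E F) (0, y)
  have := h.2 _ hN
  simp only [(hG.hasFDerivAt_aff (ContinuousLinearMap.inl ℝ E F) (0, y) _).fderiv] at this
  simpa using this

lemma Stein.transport {μ : Measure E} {ν : Measure F} (e : E ≃ᵐ F) (he : MeasurePreserving e μ ν)
    (L : F →L[ℝ] E) (hL : ∀ x, L (e x) = x) {l : F →L[ℝ] ℝ} {v : F} (h : Stein ν l v)
    (l' : E →L[ℝ] ℝ) (hl' : ∀ x, l' x = l (e x)) : Stein μ l' (L v) := by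
  constructor
  · have := he.integrable_comp_of_integrable h.1
    refine this.congr (ae_of_all _ fun x => by simp [hl'])
  · intro G hG
    have hN := hG.comp_aff L 0
    have := h.2 _ hN
    simp only [(hG.hasFDerivAt_aff L 0 _).fderiv] at this
    rw [← he.integral_comp', ← he.integral_comp'] at this
    simpa [hL, hl'] using this

lemma Stein.prod_right {μ : Measure E} {ν : Measure F} [IsProbabilityMeasure μ]
    [IsProbabilityMeasure ν] {l : E →L[ℝ] ℝ} {v : E} (h : Stein μ l v) :
    Stein (ν.prod μ) (l.comp (ContinuousLinearMap.snd ℝ F E)) (0, v) :=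
  Stein.transport MeasurableEquiv.prodComm Measure.measurePreserving_swap
    ((ContinuousLinearMap.snd ℝ E F).prod (ContinuousLinearMap.fst ℝ E F)) (fun x => by rfl)
    (h.prod_left (ν := ν)) _ (fun x => by rfl)

/-- insertNth as a continuous linear map -/
def insCLM {n : ℕ} (i : Fin (n + 1)) : (E × (Fin n → E)) →L[ℝ] (Fin (n + 1) → E) where
  toFun p := i.insertNth (α := fun _ => E) p.1 p.2
  map_add' p q := by
    simp
  map_smul' c p := by
    ext k
    refine Fin.succAboveCases i ?_ (fun j => ?_) k <;> simp
  cont := Continuous.finInsertNth i continuous_fst continuous_snd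

lemma Stein.pi {n : ℕ} {μ : Measure E} [IsProbabilityMeasure μ] {l : E →L[ℝ] ℝ} {v : E}
    (h : Stein μ l v) (i : Fin n) :
    Stein (Measure.pi fun _ : Fin n => μ)
      (l.comp (ContinuousLinearMap.proj (R := ℝ) (φ := fun _ : Fin n => E) i)) (Pi.single i v) := by
  obtain _ | n := n
  · exact i.elim0
  have := Stein.transport _ (measurePreserving_piFinSuccAbove (fun _ : Fin (n + 1) => μ) i)
    (insCLM i) (fun x => by
      exact (MeasurableEquiv.piFinSuccAbove (fun _ => E) i).symm_apply_apply x)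
    (h.prod_left (ν := Measure.pi fun _ : Fin n => μ))
    (l.comp (ContinuousLinearMap.proj (R := ℝ) (φ := fun _ : Fin (n+1) => E) i)) (fun x => by rfl)
  convert this using 1
  ext k
  refine Fin.succAboveCases i ?_ (fun j => ?_) k <;> simp [insCLM]

end stein

lemma stein_gaussian : Stein (gaussianReal 0 1) (ContinuousLinearMap.id ℝ ℝ) 1 := by
  have hI : Integrable (fun x : ℝ => x) (gaussianReal 0 1) := by
    have := (memLp_id_gaussianReal' (μ := 0) (v := 1) 1 (by simp))
    exact memLp_one_iff_integrable.1 this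
  refine ⟨hI, fun G hG => ?_⟩
  have key : ∀ f : ℝ → ℝ, Integrable f (gaussianReal 0 1) →
      Integrable (fun x => f x * gaussianPDFReal 0 1 x) := by
    intro f hf
    rw [gaussianReal_of_var_ne_zero _ one_ne_zero,
      integrable_withDensity_iff_integrable_smul' (measurable_gaussianPDF _ _)
      (ae_of_all _ fun _ => gaussianPDF_lt_top)] at hf
    refine hf.congr (ae_of_all _ fun x => ?_)
    simp [mul_comm]
  rw [integral_gaussianReal_eq_integral_smul one_ne_zero,
    integral_gaussianReal_eq_integral_smul one_ne_zero]
  have hd : ∀ x, HasDerivAt (gaussianPDFReal 0 1) (-(x * gaussianPDFReal 0 1 x)) x := by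
    intro x
    have h1 : HasDerivAt (fun x : ℝ => -(x - 0) ^ 2 / (2 * ((1 : NNReal) : ℝ))) (-x) x := by
      have := (((hasDerivAt_id x).sub_const 0).pow 2).neg.div_const (2 * ((1 : NNReal) : ℝ))
      refine this.congr_deriv ?_
      simp
      ring
    have := h1.exp.const_mul (√(2 * Real.pi * ((1 : NNReal) : ℝ)))⁻¹
    rw [gaussianPDFReal_def]
    refine this.congr_deriv ?_
    ring
  have h1 := key _ (hG.integrable_mul hI)
  have h2 := key _ (hG.integrable_fderiv (μ := gaussianReal 0 1) 1)
  have h3 := key _ (hG.integrable (μ := gaussianReal 0 1))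
  have := integral_mul_deriv_eq_deriv_mul_of_integrable (u := G) (v := gaussianPDFReal 0 1)
    (u' := fun x => fderiv ℝ G x 1) (v' := fun x => -(x * gaussianPDFReal 0 1 x))
    (fun x _ => by simpa using (hG.diff x).hasDerivAt) (fun x _ => hd x)
    (h1.neg.congr (ae_of_all _ fun x => by simp; ring)) h2 h3
  have e1 : ∫ x, gaussianPDFReal 0 1 x • ((ContinuousLinearMap.id ℝ ℝ) x * G x)
      = - ∫ x, G x * -(x * gaussianPDFReal 0 1 x) := by
    rw [← integral_neg]
    refine integral_congr_ae (ae_of_all _ fun x => ?_)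
    simp only [smul_eq_mul, ContinuousLinearMap.id_apply]
    ring
  rw [e1, this, neg_neg]
  refine integral_congr_ae (ae_of_all _ fun x => ?_)
  simp only [smul_eq_mul]
  ring

section interp
variable {E : Type*} [NormedAddCommGroup E] [NormedSpace ℝ E]
  [MeasurableSpace E] [BorelSpace E] [SecondCountableTopology E]

theorem interp {P : Type*} [Fintype P] (μ : Measure E) [IsProbabilityMeasure μ]
    (f : (P → ℝ) → ℝ) (g : P → (P → ℝ) → ℝ) (hf : Nice f) (hg : ∀ p, Nice (g p))
    (hfg : ∀ x w, fderiv ℝ f x w = ∑ p, g p x * w p)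
    (lX lY : P → E →L[ℝ] ℝ) (vX vY : P → E)
    (hX : ∀ p, Stein μ (lX p) (vX p)) (hY : ∀ p, Stein μ (lY p) (vY p))
    (hXY : ∀ p q, lX p (vY q) = 0) (hYX : ∀ p q, lY p (vX q) = 0)
    (hs : ∀ p x, fderiv ℝ (g p) x (fun q => lY q (vY p) - lX q (vX p)) ≤ 0) :
    ∫ ω, f (fun p => lY p ω) ∂μ ≤ ∫ ω, f (fun p => lX p ω) ∂μ := by
  classical
  let LX : E →L[ℝ] (P → ℝ) := ContinuousLinearMap.pi lX
  let LY : E →L[ℝ] (P → ℝ) := ContinuousLinearMap.pi lY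
  let Z : ℝ → E →L[ℝ] (P → ℝ) := fun θ => Real.cos θ • LX + Real.sin θ • LY
  let F : ℝ → ℝ := fun θ => ∫ ω, f (Z θ ω) ∂μ
  have hcomp : ∀ (u : (P → ℝ) → ℝ), Nice u → ∀ θ, Nice (fun ω => u (Z θ ω)) := by
    intro u hu θ
    simpa using hu.comp_aff (Z θ) 0
  have hcompd : ∀ (u : (P → ℝ) → ℝ), Nice u → ∀ θ ω v,
      fderiv ℝ (fun ω => u (Z θ ω)) ω v = fderiv ℝ u (Z θ ω) (Z θ v) := by
    intro u hu θ ω v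
    have := (hu.hasFDerivAt_aff (Z θ) 0 ω).fderiv
    simp only [add_zero] at this
    rw [this]; rfl
  choose C hC using fun p => (hg p).2
  have hder : ∀ θ, Integrable (fun ω => ∑ p, g p (Z θ ω) *
        (-Real.sin θ * lX p ω + Real.cos θ * lY p ω)) μ ∧
      HasDerivAt F (∫ ω, ∑ p, g p (Z θ ω) *
        (-Real.sin θ * lX p ω + Real.cos θ * lY p ω) ∂μ) θ := by
    intro θ
    refine hasDerivAt_integral_of_dominated_loc_of_deriv_le
      (F := fun θ ω => f (Z θ ω)) (F' := fun θ ω => ∑ p, g p (Z θ ω) *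
        (-Real.sin θ * lX p ω + Real.cos θ * lY p ω))
      (bound := fun ω => ∑ p, C p * (|lX p ω| + |lY p ω|)) (s := Set.univ) Filter.univ_mem
      ?_ ?_ ?_ ?_ ?_ ?_
    · exact Filter.Eventually.of_forall fun θ => (hcomp f hf θ).cont.aestronglyMeasurable
    · exact (hcomp f hf θ).integrable
    · refine Continuous.aestronglyMeasurable ?_
      refine continuous_finsetSum _ fun p _ => ((hcomp _ (hg p) θ).cont.mul ?_)
      fun_prop
    · refine ae_of_all _ fun ω θ _ => ?_
      refine (norm_sum_le _ _).trans (Finset.sum_le_sum fun p _ => ?_)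
      rw [norm_mul]
      refine mul_le_mul (hC p _).1 ?_ (norm_nonneg _) ((abs_nonneg _).trans (hC p 0).1)
      refine (norm_add_le _ _).trans (add_le_add ?_ ?_)
      · rw [norm_mul, norm_neg]
        exact mul_le_of_le_one_left (abs_nonneg _) (Real.abs_sin_le_one θ)
      · rw [norm_mul]
        exact mul_le_of_le_one_left (abs_nonneg _) (Real.abs_cos_le_one θ)
    · exact integrable_finsetSum _ fun p _ => (((hX p).1.abs).add ((hY p).1.abs)).const_mul _
    · refine ae_of_all _ fun ω θ _ => ?_
      have h1 : HasDerivAt (fun θ => Z θ ω) (-Real.sin θ • LX ω + Real.cos θ • LY ω) θ :=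
        ((Real.hasDerivAt_cos θ).smul_const (LX ω)).add
          ((Real.hasDerivAt_sin θ).smul_const (LY ω))
      have h2 := ((hf.diff (Z θ ω)).hasFDerivAt).comp_hasDerivAt θ h1
      refine h2.congr_deriv ?_
      rw [hfg]
      rfl
  have hval : ∀ θ, ∫ ω, ∑ p, g p (Z θ ω) *
        (-Real.sin θ * lX p ω + Real.cos θ * lY p ω) ∂μ =
      Real.sin θ * Real.cos θ * ∑ p, ∫ ω, fderiv ℝ (g p) (Z θ ω)
        (fun q => lY q (vY p) - lX q (vX p)) ∂μ := by
    intro θ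
    have e0 : ∀ p, Integrable (fun ω => lX p ω * g p (Z θ ω)) μ :=
      fun p => (hcomp _ (hg p) θ).integrable_mul (hX p).1
    have e1 : ∀ p, Integrable (fun ω => lY p ω * g p (Z θ ω)) μ :=
      fun p => (hcomp _ (hg p) θ).integrable_mul (hY p).1
    have e2 : ∀ p ω, g p (Z θ ω) * (-Real.sin θ * lX p ω + Real.cos θ * lY p ω) =
        -Real.sin θ * (lX p ω * g p (Z θ ω)) + Real.cos θ * (lY p ω * g p (Z θ ω)) := by
      intro p ω; ring
    have e3 : ∀ p, Integrable (fun ω => -Real.sin θ * (lX p ω * g p (Z θ ω)) +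
        Real.cos θ * (lY p ω * g p (Z θ ω))) μ :=
      fun p => ((e0 p).const_mul _).add ((e1 p).const_mul _)
    simp only [e2]
    rw [integral_finsetSum _ fun p _ => e3 p, Finset.mul_sum]
    refine Finset.sum_congr rfl fun p _ => ?_
    rw [integral_add ((e0 p).const_mul _) ((e1 p).const_mul _), integral_const_mul,
      integral_const_mul, (hX p).2 _ (hcomp _ (hg p) θ), (hY p).2 _ (hcomp _ (hg p) θ),
      ← integral_const_mul, ← integral_const_mul, ← integral_add
        (((hcomp _ (hg p) θ).integrable_fderiv _).const_mul _)
        (((hcomp _ (hg p) θ).integrable_fderiv _).const_mul _), ← integral_const_mul]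
    refine integral_congr_ae (ae_of_all _ fun ω => ?_)
    simp only [hcompd _ (hg p)]
    have z1 : Z θ (vX p) = Real.cos θ • (fun q => lX q (vX p)) := by
      ext q; simp [Z, LX, LY, hYX]
    have z2 : Z θ (vY p) = Real.sin θ • (fun q => lY q (vY p)) := by
      ext q; simp [Z, LX, LY, hXY]
    have z3 : (fun q => lY q (vY p) - lX q (vX p)) =
      (fun q => lY q (vY p)) - (fun q => lX q (vX p)) := rfl
    rw [z1, z2, z3, map_smul, map_smul, map_sub]
    simp only [smul_eq_mul]
    ring
  have hanti : AntitoneOn F (Set.Icc 0 (Real.pi / 2)) := by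
    refine antitoneOn_of_deriv_nonpos (convex_Icc _ _)
      (fun θ _ => (hder θ).2.continuousAt.continuousWithinAt)
      (fun θ _ => (hder θ).2.differentiableAt.differentiableWithinAt) ?_
    intro θ hθ
    rw [interior_Icc] at hθ
    rw [(hder θ).2.deriv, hval]
    refine mul_nonpos_of_nonneg_of_nonpos ?_ ?_
    · exact mul_nonneg (Real.sin_nonneg_of_nonneg_of_le_pi hθ.1.le (by linarith [hθ.2, Real.pi_pos]))
        (Real.cos_nonneg_of_mem_Icc ⟨by linarith [hθ.1, Real.pi_pos], hθ.2.le⟩)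
    · exact Finset.sum_nonpos fun p _ => integral_nonpos fun ω => hs p _
  have h := hanti ⟨le_rfl, by positivity⟩ ⟨by positivity, le_rfl⟩
    (show (0 : ℝ) ≤ Real.pi / 2 by positivity)
  have f0 : F 0 = ∫ ω, f (fun p => lX p ω) ∂μ := by
    simp only [F, Z, Real.cos_zero, Real.sin_zero, one_smul, zero_smul, add_zero]; rfl
  have f1 : F (Real.pi / 2) = ∫ ω, f (fun p => lY p ω) ∂μ := by
    simp only [F, Z, Real.cos_pi_div_two, Real.sin_pi_div_two, one_smul, zero_smul, zero_add]; rfl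
  rwa [f0, f1] at h

/-- the smoothed function -/
noncomputable def sm {I J : Type*} [Fintype I] [Fintype J] (u : I → ℝ → ℝ) (x : I × J → ℝ) : ℝ :=
  ∏ i, (1 - ∏ j, u i (x (i, j)))

theorem smooth_gordon {I J : Type*} [Fintype I] [Fintype J]
    (μ : Measure E) [IsProbabilityMeasure μ]
    (u : I → ℝ → ℝ) (c : ℝ) (hc : 0 ≤ c) (hu : ∀ i, Nice (u i))
    (hu0 : ∀ i s, 0 ≤ u i s) (hu1 : ∀ i s, u i s ≤ 1) (hua : ∀ i, Antitone (u i))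
    (hud : ∀ i s, HasDerivAt (u i) (-(c * (u i s * (1 - u i s)))) s)
    (lX lY : I × J → E →L[ℝ] ℝ) (vX vY : I × J → E)
    (hX : ∀ p, Stein μ (lX p) (vX p)) (hY : ∀ p, Stein μ (lY p) (vY p))
    (hXY : ∀ p q, lX p (vY q) = 0) (hYX : ∀ p q, lY p (vX q) = 0)
    (hle : ∀ p q, lY q (vY p) ≤ lX q (vX p))
    (heq : ∀ i j k, lY (i, k) (vY (i, j)) = lX (i, k) (vX (i, j))) :
    ∫ ω, sm u (fun p => lY p ω) ∂μ ≤ ∫ ω, sm u (fun p => lX p ω) ∂μ := by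
  classical
  have hcoord : ∀ i (p : I × J), Nice (fun x : I × J → ℝ => u i (x p)) := by
    intro i p
    simpa using (hu i).comp_aff (ContinuousLinearMap.proj (R := ℝ) (φ := fun _ : I × J => ℝ) p) 0
  have hblock : ∀ i, Nice (fun x : I × J → ℝ => 1 - ∏ j, u i (x (i, j))) := fun i =>
    (nice_prod _ fun j => hcoord i (i, j)).one_sub
  let g : I × J → (I × J → ℝ) → ℝ := fun p x =>
    c * ((1 - u p.1 (x p)) * ((∏ k, u p.1 (x (p.1, k))) *
      ∏ i ∈ Finset.univ.erase p.1, (1 - ∏ j, u i (x (i, j)))))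
  have hg : ∀ p, Nice (g p) := fun p =>
    (nice_const c).mul ((hcoord _ _).one_sub.mul
      ((nice_prod _ fun k => hcoord p.1 (p.1, k)).mul (nice_prod _ hblock)))
  have hf : Nice (sm u : (I × J → ℝ) → ℝ) := nice_prod _ hblock
  refine interp μ (sm u) g hf hg ?_ lX lY vX vY hX hY hXY hYX ?_
  · intro x w
    have hline : HasDerivAt (fun t : ℝ => x + t • w) w 0 := by
      simpa using ((hasDerivAt_id (0 : ℝ)).smul_const w).const_add x
    have h1 : HasDerivAt (fun t : ℝ => sm u (x + t • w)) (fderiv ℝ (sm u) x w) 0 := by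
      have hfd : HasFDerivAt (sm u) (fderiv ℝ (sm u) x) (x + (0 : ℝ) • w) := by
        simpa using (hf.diff x).hasFDerivAt
      exact hfd.comp_hasDerivAt 0 hline
    have hcd : ∀ i j, HasDerivAt (fun t : ℝ => u i (x (i, j) + t * w (i, j)))
        (-(c * (u i (x (i, j)) * (1 - u i (x (i, j))))) * w (i, j)) 0 := by
      intro i j
      have a1 : HasDerivAt (fun t : ℝ => x (i, j) + t * w (i, j)) (w (i, j)) 0 := by
        simpa using ((hasDerivAt_id (0 : ℝ)).mul_const (w (i, j))).const_add (x (i, j))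
      have a2 : HasDerivAt (u i) (-(c * (u i (x (i, j)) * (1 - u i (x (i, j))))))
        (x (i, j) + 0 * w (i, j)) := by simpa using hud i (x (i, j))
      exact a2.comp 0 a1
    have hbd : ∀ i, HasDerivAt (fun t : ℝ => 1 - ∏ j, u i (x (i, j) + t * w (i, j)))
        (∑ j, c * ((1 - u i (x (i, j))) * (∏ k, u i (x (i, k)))) * w (i, j)) 0 := by
      intro i
      have := (HasDerivAt.fun_finsetProd (u := Finset.univ) fun j _ => hcd i j).const_sub 1
      refine this.congr_deriv ?_
      rw [← Finset.sum_neg_distrib]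
      refine Finset.sum_congr rfl fun j _ => ?_
      rw [← Finset.mul_prod_erase Finset.univ _ (Finset.mem_univ j)]
      simp only [zero_mul, add_zero, smul_eq_mul]
      ring
    have h2 : HasDerivAt (fun t : ℝ => sm u (x + t • w)) (∑ p, g p x * w p) 0 := by
      have := (HasDerivAt.fun_finsetProd (u := Finset.univ) fun i _ => hbd i)
      refine this.congr_deriv ?_
      rw [Fintype.sum_prod_type]
      refine Finset.sum_congr rfl fun i _ => ?_
      rw [smul_eq_mul, Finset.mul_sum]
      refine Finset.sum_congr rfl fun j _ => ?_
      simp only [zero_mul, add_zero, g]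
      ring
    exact h1.unique h2
  · rintro ⟨i, j⟩ x
    set w : I × J → ℝ := fun q => lY q (vY (i, j)) - lX q (vX (i, j)) with hw
    have hw0 : ∀ k, w (i, k) = 0 := fun k => by simp [hw, heq]
    have hwn : ∀ q, w q ≤ 0 := fun q => by simp [hw, hle]
    have hline : HasDerivAt (fun t : ℝ => x + t • w) w 0 := by
      simpa using ((hasDerivAt_id (0 : ℝ)).smul_const w).const_add x
    have h1 : HasDerivAt (fun t : ℝ => g (i, j) (x + t • w)) (fderiv ℝ (g (i, j)) x w) 0 := by
      have hfd : HasFDerivAt (g (i, j)) (fderiv ℝ (g (i, j)) x) (x + (0 : ℝ) • w) := by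
        simpa using ((hg (i, j)).diff x).hasFDerivAt
      exact hfd.comp_hasDerivAt 0 hline
    have hanti : Antitone (fun t : ℝ => g (i, j) (x + t • w)) := by
      intro s t hst
      simp only [g, Pi.add_apply, Pi.smul_apply, smul_eq_mul, hw0, mul_zero, add_zero]
      refine mul_le_mul_of_nonneg_left ?_ hc
      refine mul_le_mul_of_nonneg_left ?_ (by linarith [hu1 i (x (i, j))])
      refine mul_le_mul_of_nonneg_left ?_ (Finset.prod_nonneg fun k _ => hu0 _ _)
      refine Finset.prod_le_prod (fun l _ => ?_) (fun l _ => ?_)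
      · have : ∏ k, u l (x (l, k) + t * w (l, k)) ≤ 1 :=
          Finset.prod_le_one (fun k _ => hu0 _ _) (fun k _ => hu1 _ _)
        linarith
      · have : ∏ k, u l (x (l, k) + s * w (l, k)) ≤ ∏ k, u l (x (l, k) + t * w (l, k)) := by
          refine Finset.prod_le_prod (fun k _ => hu0 _ _) (fun k _ => hua l ?_)
          nlinarith [hwn (l, k)]
        linarith
    rw [← h1.deriv]
    exact hanti.deriv_nonpos

end interp

section limit

lemma tendsto_sig (lam s : ℝ) :
    Filter.Tendsto (fun k : ℕ => Real.sigmoid (-((k : ℝ) ^ 2) * s + ((k : ℝ) ^ 2 * lam - k)))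
      Filter.atTop (nhds (if s < lam then 1 else 0)) := by
  have hk : Filter.Tendsto (fun k : ℕ => (k : ℝ)) Filter.atTop Filter.atTop :=
    tendsto_natCast_atTop_atTop
  split_ifs with h
  · refine Real.tendsto_sigmoid_atTop.comp ?_
    have h1 : Filter.Tendsto (fun k : ℕ => (lam - s) * (k : ℝ) + (-1)) Filter.atTop Filter.atTop :=
      Filter.tendsto_atTop_add_const_right _ _ (hk.const_mul_atTop (sub_pos.2 h))
    refine (hk.atTop_mul_atTop₀ h1).congr fun k => ?_
    ring
  · refine Real.tendsto_sigmoid_atBot.comp ?_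
    refine Filter.tendsto_atBot_mono (fun k => ?_) (Filter.tendsto_neg_atTop_atBot.comp hk)
    simp only [Function.comp]
    nlinarith [sq_nonneg (k : ℝ), mul_nonneg (sq_nonneg (k : ℝ)) (sub_nonneg.2 (not_lt.1 h))]

variable {E : Type*} [NormedAddCommGroup E] [NormedSpace ℝ E]
  [MeasurableSpace E] [BorelSpace E] [SecondCountableTopology E]

lemma meas_fin {I J : Type*} [Fintype I] [Fintype J] (lam : I → ℝ) (l : I × J → E →L[ℝ] ℝ) :
    MeasurableSet {ω | ∀ i, ∃ j, lam i ≤ l (i, j) ω} := by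
  have : {ω | ∀ i, ∃ j, lam i ≤ l (i, j) ω} = ⋂ i, ⋃ j, {ω | lam i ≤ l (i, j) ω} := by
    ext; simp
  rw [this]
  exact MeasurableSet.iInter fun i => MeasurableSet.iUnion fun j =>
    (isClosed_le continuous_const (l (i, j)).continuous).measurableSet

theorem finite_gordon {I J : Type*} [Fintype I] [Fintype J]
    (μ : Measure E) [IsProbabilityMeasure μ] (lam : I → ℝ)
    (lX lY : I × J → E →L[ℝ] ℝ) (vX vY : I × J → E)
    (hX : ∀ p, Stein μ (lX p) (vX p)) (hY : ∀ p, Stein μ (lY p) (vY p))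
    (hXY : ∀ p q, lX p (vY q) = 0) (hYX : ∀ p q, lY p (vX q) = 0)
    (hle : ∀ p q, lY q (vY p) ≤ lX q (vX p))
    (heq : ∀ i j k, lY (i, k) (vY (i, j)) = lX (i, k) (vX (i, j))) :
    μ {ω | ∀ i, ∃ j, lam i ≤ lY (i, j) ω} ≤ μ {ω | ∀ i, ∃ j, lam i ≤ lX (i, j) ω} := by
  classical
  let u : ℕ → I → ℝ → ℝ := fun k i s =>
    Real.sigmoid (-((k : ℝ) ^ 2) * s + ((k : ℝ) ^ 2 * lam i - k))
  have hu : ∀ k i, Nice (u k i) := fun k i =>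
    nice_sigmoid.comp_aff ((-((k : ℝ) ^ 2)) • ContinuousLinearMap.id ℝ ℝ)
      ((k : ℝ) ^ 2 * lam i - k)
  have hu0 : ∀ k i s, 0 ≤ u k i s := fun k i s => Real.sigmoid_nonneg _
  have hu1 : ∀ k i s, u k i s ≤ 1 := fun k i s => Real.sigmoid_le_one _
  have hua : ∀ k i, Antitone (u k i) := fun k i s t hst => by
    refine Real.sigmoid_monotone ?_
    nlinarith [mul_nonneg (sq_nonneg (k : ℝ)) (sub_nonneg.2 hst)]
  have hud : ∀ k i s, HasDerivAt (u k i) (-((k : ℝ) ^ 2 * (u k i s * (1 - u k i s)))) s := by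
    intro k i s
    have a1 : HasDerivAt (fun s : ℝ => -((k : ℝ) ^ 2) * s + ((k : ℝ) ^ 2 * lam i - k))
        (-((k : ℝ) ^ 2)) s := by
      simpa using ((hasDerivAt_id s).const_mul (-((k : ℝ) ^ 2))).add_const
        ((k : ℝ) ^ 2 * lam i - k)
    refine ((Real.hasDerivAt_sigmoid _).comp s a1).congr_deriv ?_
    simp only [u]
    ring
  have hsm : ∀ k, ∫ ω, sm (u k) (fun p => lY p ω) ∂μ ≤ ∫ ω, sm (u k) (fun p => lX p ω) ∂μ :=
    fun k => smooth_gordon μ (u k) ((k : ℝ) ^ 2) (sq_nonneg _) (hu k) (hu0 k) (hu1 k) (hua k)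
      (hud k) lX lY vX vY hX hY hXY hYX hle heq
  have hlim : ∀ l : I × J → E →L[ℝ] ℝ,
      Filter.Tendsto (fun k => ∫ ω, sm (u k) (fun p => l p ω) ∂μ) Filter.atTop
        (nhds (μ.real {ω | ∀ i, ∃ j, lam i ≤ l (i, j) ω})) := by
    intro l
    rw [← integral_indicator_one (meas_fin lam l)]
    refine tendsto_integral_of_dominated_convergence (fun _ => 1) ?_ (integrable_const _) ?_ ?_
    · intro k
      refine Continuous.aestronglyMeasurable ?_
      refine continuous_finsetProd _ fun i _ => continuous_const.sub ?_
      exact continuous_finsetProd _ fun j _ => (hu k i).cont.comp (l (i, j)).continuous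
    · intro k
      refine ae_of_all _ fun ω => ?_
      have b : ∀ i, 0 ≤ ∏ j, u k i (l (i, j) ω) ∧ ∏ j, u k i (l (i, j) ω) ≤ 1 := fun i =>
        ⟨Finset.prod_nonneg fun _ _ => hu0 _ _ _,
          Finset.prod_le_one (fun _ _ => hu0 _ _ _) (fun _ _ => hu1 _ _ _)⟩
      rw [Real.norm_eq_abs, abs_of_nonneg]
      · exact Finset.prod_le_one (fun i _ => by linarith [(b i).2]) (fun i _ => by linarith [(b i).1])
      · exact Finset.prod_nonneg (fun i _ => by linarith [(b i).2])
    · refine ae_of_all _ fun ω => ?_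
      have : Filter.Tendsto (fun k => sm (u k) (fun p => l p ω)) Filter.atTop
          (nhds (∏ i, (1 - ∏ j, if l (i, j) ω < lam i then (1 : ℝ) else 0))) :=
        tendsto_finsetProd _ fun i _ => tendsto_const_nhds.sub
          (tendsto_finsetProd _ fun j _ => tendsto_sig _ _)
      convert this using 2
      simp only [Finset.prod_boole, Finset.mem_univ, true_imp_iff]
      have e : ∀ i, (1 - if ∀ j, l (i, j) ω < lam i then (1 : ℝ) else 0) =
          if ∃ j, lam i ≤ l (i, j) ω then 1 else 0 := by
        intro i
        by_cases h : ∃ j, lam i ≤ l (i, j) ω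
        · have h' : ¬ ∀ j, l (i, j) ω < lam i := by push Not; exact h
          simp only [h, h', if_true, if_false]; ring
        · have h' : ∀ j, l (i, j) ω < lam i := by push Not at h; exact h
          simp only [h, h', if_true, if_false, implies_true]; ring
      simp only [e, Finset.prod_boole, Finset.mem_univ, true_imp_iff, Set.indicator,
        Set.mem_ofPred_eq, Pi.one_apply]
  have := le_of_tendsto_of_tendsto' (hlim lY) (hlim lX) hsm
  exact (ENNReal.toReal_le_toReal (measure_ne_top _ _) (measure_ne_top _ _)).1 this

end limit

section concrete

abbrev E4 (m n : ℕ) := (Fin m → Fin n → ℝ) × ((Fin m → ℝ) × ((Fin n → ℝ) × ℝ))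

instance (m n : ℕ) : IsProbabilityMeasure (muGordon m n) := by
  unfold muGordon; infer_instance

noncomputable def vX {m n : ℕ} (φ : Fin n → ℝ) (a : Fin m → ℝ) : E4 m n :=
  (fun i j => a i * φ j, 0, 0, e2norm φ)

noncomputable def vY {m n : ℕ} (φ : Fin n → ℝ) (a : Fin m → ℝ) : E4 m n :=
  (0, fun i => e2norm φ * a i, φ, 0)

lemma exX {m n : ℕ} (φ : Fin n → ℝ) (a : Fin m → ℝ) : ∃ l : E4 m n →L[ℝ] ℝ,
    Stein (muGordon m n) l (vX φ a) ∧
    ∀ ω, l ω = (∑ i, ∑ j, a i * ω.1 i j * φ j) + e2norm φ * ω.2.2.2 := by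
  have hA : ∀ (i : Fin m) (j : Fin n), ∃ l : E4 m n →L[ℝ] ℝ,
      Stein (muGordon m n) l (Pi.single i (Pi.single j 1), 0) ∧ ∀ ω, l ω = ω.1 i j :=
    fun i j => ⟨_, ((stein_gaussian.pi j).pi i).prod_left, fun ω => rfl⟩
  have hγ : ∃ l : E4 m n →L[ℝ] ℝ,
      Stein (muGordon m n) l (0, 0, 0, 1) ∧ ∀ ω, l ω = ω.2.2.2 :=
    ⟨_, ((stein_gaussian.prod_right (ν := Measure.pi fun _ : Fin n => gaussianReal 0 1)).prod_right
      (ν := Measure.pi fun _ : Fin m => gaussianReal 0 1)).prod_right, fun ω => rfl⟩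
  choose lA hA1 hA2 using hA
  obtain ⟨lγ, hγ1, hγ2⟩ := hγ
  refine ⟨(∑ i, ∑ j, (a i * φ j) • lA i j) + e2norm φ • lγ, ?_, ?_⟩
  · have := (stein_sum Finset.univ fun i => stein_sum Finset.univ fun j =>
      (hA1 i j).smul (a i * φ j)).add (hγ1.smul (e2norm φ))
    convert this using 1
    refine Prod.ext ?_ (Prod.ext ?_ (Prod.ext ?_ ?_))
    · ext i j
      simp [vX, Prod.fst_sum, Finset.sum_apply, Pi.single_apply, ite_apply]
    all_goals simp [vX, Prod.snd_sum, Prod.fst_sum]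
  · intro ω
    simp [ContinuousLinearMap.sum_apply, hA2, hγ2]
    refine Finset.sum_congr rfl fun i _ => Finset.sum_congr rfl fun j _ => by ring

lemma exY {m n : ℕ} (φ : Fin n → ℝ) (a : Fin m → ℝ) : ∃ l : E4 m n →L[ℝ] ℝ,
    Stein (muGordon m n) l (vY φ a) ∧
    ∀ ω, l ω = e2norm φ * (∑ i, ω.2.1 i * a i) + (∑ j, ω.2.2.1 j * φ j) := by
  have hG : ∀ (i : Fin m), ∃ l : E4 m n →L[ℝ] ℝ,
      Stein (muGordon m n) l (0, Pi.single i 1, 0) ∧ ∀ ω, l ω = ω.2.1 i :=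
    fun i => ⟨_, (((stein_gaussian.pi i).prod_left).prod_right), fun ω => rfl⟩
  have hH : ∀ (j : Fin n), ∃ l : E4 m n →L[ℝ] ℝ,
      Stein (muGordon m n) l (0, 0, Pi.single j 1, 0) ∧ ∀ ω, l ω = ω.2.2.1 j :=
    fun j => ⟨_, (((stein_gaussian.pi j).prod_left).prod_right).prod_right, fun ω => rfl⟩
  choose lG hG1 hG2 using hG
  choose lH hH1 hH2 using hH
  refine ⟨(∑ i, (e2norm φ * a i) • lG i) + ∑ j, φ j • lH j, ?_, ?_⟩
  · have := (stein_sum Finset.univ fun i => (hG1 i).smul (e2norm φ * a i)).add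
      (stein_sum Finset.univ fun j => (hH1 j).smul (φ j))
    convert this using 1
    refine Prod.ext ?_ (Prod.ext ?_ (Prod.ext ?_ ?_))
    · simp [vY, Prod.snd_sum, Prod.fst_sum]
    · ext i
      simp [vY, Prod.snd_sum, Prod.fst_sum, Finset.sum_apply, Pi.single_apply]
    · ext i
      simp [vY, Prod.snd_sum, Prod.fst_sum, Finset.sum_apply, Pi.single_apply]
    · simp [vY, Prod.snd_sum, Prod.fst_sum]
  · intro ω
    simp [ContinuousLinearMap.sum_apply, hG2, hH2, Finset.mul_sum]
    congr 1
    · exact Finset.sum_congr rfl fun i _ => by ring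
    · exact Finset.sum_congr rfl fun i _ => by ring

lemma e2norm_sq {d : ℕ} (x : Fin d → ℝ) : e2norm x * e2norm x = ∑ i, x i * x i := by
  unfold e2norm
  rw [Real.mul_self_sqrt (Finset.sum_nonneg fun i _ => sq_nonneg _)]
  simp only [sq]

lemma e2_cs {d : ℕ} (x y : Fin d → ℝ) : ∑ i, x i * y i ≤ e2norm x * e2norm y := by
  exact Real.sum_mul_le_sqrt_mul_sqrt _ _ _

theorem finite_concrete {m n K J : ℕ} (φ : Fin K → Fin n → ℝ) (a : Fin J → Fin m → ℝ)
    (ha : ∀ j, e2norm (a j) = 1) (lam : Fin K → ℝ) :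
    muGordon m n {ω | ∀ i, ∃ j, lam i ≤ e2norm (φ i) * (∑ k, ω.2.1 k * a j k) +
        (∑ k, ω.2.2.1 k * φ i k)} ≤
    muGordon m n {ω | ∀ i, ∃ j, lam i ≤ (∑ k, ∑ l, a j k * ω.1 k l * φ i l) +
        e2norm (φ i) * ω.2.2.2} := by
  choose lX hX1 hX2 using @exX m n
  choose lY hY1 hY2 using @exY m n
  have cX : ∀ φ a φ' a', lX φ a (vX φ' a') =
      (∑ k, a k * a' k) * (∑ l, φ l * φ' l) + e2norm φ * e2norm φ' := by
    intro φ a φ' a'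
    rw [hX2, Finset.sum_mul_sum]
    simp only [vX]
    congr 1
    refine Finset.sum_congr rfl fun i _ => Finset.sum_congr rfl fun j _ => by ring
  have cY : ∀ φ a φ' a', lY φ a (vY φ' a') =
      e2norm φ * e2norm φ' * (∑ k, a k * a' k) + (∑ l, φ l * φ' l) := by
    intro φ a φ' a'
    rw [hY2, Finset.mul_sum, Finset.mul_sum]
    simp only [vY]
    congr 1
    · refine Finset.sum_congr rfl fun i _ => by ring
    · refine Finset.sum_congr rfl fun i _ => by ring
  have := finite_gordon (muGordon m n) lam
    (fun p : Fin K × Fin J => lX (φ p.1) (a p.2)) (fun p => lY (φ p.1) (a p.2))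
    (fun p => vX (φ p.1) (a p.2)) (fun p => vY (φ p.1) (a p.2))
    (fun p => hX1 _ _) (fun p => hY1 _ _)
    (fun p q => by simp [hX2, vY]) (fun p q => by simp [hY2, vX])
    (fun p q => by
      rw [cX, cY]
      have h1 := e2_cs (φ q.1) (φ p.1)
      have h2 := e2_cs (a q.2) (a p.2)
      rw [ha, ha] at h2
      nlinarith [mul_nonneg (sub_nonneg.2 h1) (sub_nonneg.2 h2)])
    (fun i j k => by
      simp only [cX, cY, e2norm_sq]
      ring)
  simpa only [hX2, hY2] using this

lemma e2norm_cont {d : ℕ} : Continuous (e2norm : (Fin d → ℝ) → ℝ) := by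
  unfold e2norm; fun_prop

lemma sphere_compact (m : ℕ) : IsCompact {a : Fin m → ℝ | e2norm a = 1} := by
  refine Metric.isCompact_of_isClosed_isBounded
    (isClosed_eq e2norm_cont continuous_const) ?_
  refine (Metric.isBounded_closedBall (x := (0 : Fin m → ℝ)) (r := 1)).subset fun a ha => ?_
  rw [mem_closedBall_zero_iff, pi_norm_le_iff_of_nonneg zero_le_one]
  intro i
  have h1 := e2norm_sq a
  rw [show e2norm a = 1 from ha] at h1
  have h2 : a i * a i ≤ ∑ i, a i * a i :=
    Finset.single_le_sum (f := fun i => a i * a i) (fun i _ => mul_self_nonneg _) (Finset.mem_univ i)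
  rw [Real.norm_eq_abs]
  exact abs_le_one_iff_mul_self_le_one.2 (by linarith)

lemma sphere_nonempty {m : ℕ} (hm : 1 ≤ m) : {a : Fin m → ℝ | e2norm a = 1}.Nonempty := by
  refine ⟨Pi.single ⟨0, hm⟩ 1, ?_⟩
  simp [e2norm, Pi.single_apply]

lemma sup_iff {m : ℕ} (hm : 1 ≤ m) (h : (Fin m → ℝ) → ℝ) (hh : Continuous h) :
    0 ≤ sSup {z : ℝ | ∃ a : Fin m → ℝ, e2norm a = 1 ∧ z = h a} ↔
      ∃ a, e2norm a = 1 ∧ 0 ≤ h a := by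
  have e : {z : ℝ | ∃ a : Fin m → ℝ, e2norm a = 1 ∧ z = h a} =
      h '' {a : Fin m → ℝ | e2norm a = 1} := by
    ext z; simp [eq_comm]
  have hc := (sphere_compact m).image hh
  rw [e]
  constructor
  · intro h0
    obtain ⟨a, ha, hae⟩ := hc.sSup_mem ((sphere_nonempty hm).image h)
    exact ⟨a, ha, hae ▸ h0⟩
  · rintro ⟨a, ha, h0⟩
    exact h0.trans (le_csSup hc.bddAbove ⟨a, ha, rfl⟩)

theorem approx {Ω : Type*} [MeasurableSpace Ω] (μ : Measure Ω) [IsProbabilityMeasure μ]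
    {A B : Type*} [TopologicalSpace A] [TopologicalSpace B] [T2Space A]
    [SecondCountableTopology A] [SecondCountableTopology B]
    (Φ : Set A) (S : Set B) (hΦ : IsCompact Φ) (hS : IsCompact S) (hΦn : Φ.Nonempty)
    (hSn : S.Nonempty) (ψ : A → ℝ) (hψ : Continuous ψ) (X Y : Ω → A → B → ℝ)
    (hXc : ∀ ω, Continuous (fun p : A × B => X ω p.1 p.2))
    (hYc : ∀ ω, Continuous (fun p : A × B => Y ω p.1 p.2))
    (hXm : ∀ a b, Measurable (fun ω => X ω a b))
    (hfin : ∀ (K J : ℕ) (φ : Fin K → A) (b : Fin J → B) (_ : ∀ j, b j ∈ S) (lam : Fin K → ℝ),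
      μ {ω | ∀ i, ∃ j, lam i ≤ Y ω (φ i) (b j)} ≤ μ {ω | ∀ i, ∃ j, lam i ≤ X ω (φ i) (b j)}) :
    μ {ω | ∀ φ ∈ Φ, ∃ b ∈ S, ψ φ ≤ Y ω φ b} ≤ μ {ω | ∀ φ ∈ Φ, ∃ b ∈ S, ψ φ ≤ X ω φ b} := by
  have := hΦn.to_subtype
  have := hSn.to_subtype
  obtain ⟨d, hd⟩ := TopologicalSpace.exists_dense_seq Φ
  obtain ⟨t, ht⟩ := TopologicalSpace.exists_dense_seq S
  let C : (Ω → A → B → ℝ) → ℕ → Set Ω := fun X k =>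
    {ω | ∀ i : Fin k, ∃ j : ℕ, ψ (d i) - 1 / ((k : ℝ) + 1) ≤ X ω (d i) (t j)}
  have hCU : ∀ X k, C X k = ⋃ J : ℕ, {ω | ∀ i : Fin k, ∃ j : Fin J,
      ψ (d i) - 1 / ((k : ℝ) + 1) ≤ X ω (d i) (t j)} := by
    intro X k
    ext ω
    simp only [C, Set.mem_iUnion, Set.mem_ofPred_eq]
    constructor
    · intro h
      choose j hj using h
      refine ⟨Finset.univ.sup j + 1, fun i => ⟨⟨j i, ?_⟩, hj i⟩⟩
      exact Nat.lt_succ_of_le (Finset.le_sup (Finset.mem_univ i))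
    · rintro ⟨J, h⟩ i
      obtain ⟨j, hj⟩ := h i
      exact ⟨j, hj⟩
  have hmono : ∀ (X : Ω → A → B → ℝ) (k : ℕ), Monotone (fun J : ℕ => {ω | ∀ i : Fin k, ∃ j : Fin J,
      ψ (d i) - 1 / ((k : ℝ) + 1) ≤ X ω (d i) (t j)}) := by
    intro X k J J' hJ ω hω i
    obtain ⟨j, hj⟩ := hω i
    exact ⟨⟨j, j.2.trans_le hJ⟩, hj⟩
  have hC : ∀ k, μ (C Y k) ≤ μ (C X k) := by
    intro k
    rw [hCU, hCU, (hmono Y k).measure_iUnion, (hmono X k).measure_iUnion]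
    exact iSup_mono fun J => hfin k J (fun i => d i) (fun j => t j) (fun j => (t j).2) _
  have hCm : ∀ k, MeasurableSet (C X k) := by
    intro k
    have : C X k = ⋂ i : Fin k, ⋃ j : ℕ, {ω | ψ (d i) - 1 / ((k : ℝ) + 1) ≤ X ω (d i) (t j)} := by
      ext; simp [C]
    rw [this]
    exact MeasurableSet.iInter fun i => MeasurableSet.iUnion fun j =>
      measurableSet_le measurable_const (hXm _ _)
  have hanti : Antitone (C X) := by
    intro k k' hk ω hω i
    obtain ⟨j, hj⟩ := hω ⟨i, i.2.trans_le hk⟩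
    refine ⟨j, le_trans ?_ hj⟩
    have : 1 / ((k' : ℝ) + 1) ≤ 1 / ((k : ℝ) + 1) := by
      have : (k : ℝ) ≤ k' := by exact_mod_cast hk
      exact one_div_le_one_div_of_le (by positivity) (by linarith)
    simp only
    linarith
  have hYC : ∀ k, {ω | ∀ φ ∈ Φ, ∃ b ∈ S, ψ φ ≤ Y ω φ b} ⊆ C Y k := by
    intro k ω hω i
    obtain ⟨b, hb, hle⟩ := hω (d i) (d i).2
    have hcont : Continuous (fun b : S => Y ω (d i) b) :=
      (hYc ω).comp (continuous_const.prodMk continuous_subtype_val)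
    have hopen : IsOpen {b : S | ψ (d i) - 1 / ((k : ℝ) + 1) < Y ω (d i) b} :=
      isOpen_lt continuous_const hcont
    have hpos : 0 < 1 / ((k : ℝ) + 1) := by positivity
    obtain ⟨j, hx⟩ := ht.exists_mem_open hopen ⟨⟨b, hb⟩, by
      simp only [Set.mem_ofPred_eq]; linarith⟩
    exact ⟨j, le_of_lt hx⟩
  have hXC : (⋂ k, C X k) ⊆ {ω | ∀ φ ∈ Φ, ∃ b ∈ S, ψ φ ≤ X ω φ b} := by
    intro ω hω
    rw [Set.mem_iInter] at hω
    have hdd : ∀ i, ∃ b ∈ S, ψ (d i) ≤ X ω (d i) b := by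
      intro i
      have hcont : Continuous (fun b : B => X ω (d i) b) :=
        (hXc ω).comp (continuous_const.prodMk continuous_id)
      obtain ⟨b, hb, hmax⟩ := hS.exists_isMaxOn hSn hcont.continuousOn
      refine ⟨b, hb, ?_⟩
      have hlim : Filter.Tendsto (fun k : ℕ => ψ (d i) - 1 / ((k : ℝ) + 1)) Filter.atTop
          (nhds (ψ (d i) - 0)) :=
        tendsto_const_nhds.sub tendsto_one_div_add_atTop_nhds_zero_nat
      rw [sub_zero] at hlim
      refine le_of_tendsto hlim ?_
      filter_upwards [Filter.eventually_gt_atTop i] with k hk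
      obtain ⟨j, hj⟩ := hω k ⟨i, hk⟩
      exact hj.trans (hmax (t j).2)
    have hcl : IsClosed (Prod.fst '' ((Φ ×ˢ S) ∩ {p : A × B | ψ p.1 ≤ X ω p.1 p.2})) := by
      refine IsCompact.isClosed (IsCompact.image ?_ continuous_fst)
      exact (hΦ.prod hS).inter_right (isClosed_le (hψ.comp continuous_fst) (hXc ω))
    intro φ hφ
    have hcl' := hcl.preimage (continuous_subtype_val (p := fun x => x ∈ Φ))
    have hsub : Set.range d ⊆ Subtype.val ⁻¹'
        (Prod.fst '' ((Φ ×ˢ S) ∩ {p : A × B | ψ p.1 ≤ X ω p.1 p.2})) := by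
      rintro _ ⟨i, rfl⟩
      obtain ⟨b, hb, hle⟩ := hdd i
      exact ⟨(d i, b), ⟨⟨(d i).2, hb⟩, hle⟩, rfl⟩
    have := closure_minimal hsub hcl' (hd ⟨φ, hφ⟩)
    obtain ⟨⟨φ', b⟩, ⟨⟨_, hb⟩, hle⟩, he⟩ := this
    simp only at he
    subst he
    exact ⟨b, hb, hle⟩
  calc μ {ω | ∀ φ ∈ Φ, ∃ b ∈ S, ψ φ ≤ Y ω φ b} ≤ ⨅ k, μ (C X k) :=
        le_iInf fun k => (measure_mono (hYC k)).trans (hC k)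
    _ = μ (⋂ k, C X k) := (hanti.measure_iInter (fun k => (hCm k).nullMeasurableSet)
        ⟨0, measure_ne_top _ _⟩).symm
    _ ≤ _ := measure_mono hXC

end concrete

end Gordon

theorem lasso_stmt10 (m n : ℕ) (hm : 1 ≤ m) (hn : 1 ≤ n)
    (Φ : Set (Fin n → ℝ)) (hΦne : Φ.Nonempty) (hΦc : IsCompact Φ)
    (ψ : (Fin n → ℝ) → ℝ) (hψ : Continuous ψ) :
    muGordon m n
      {ω | ∀ φ ∈ Φ, 0 ≤ sSup {z : ℝ | ∃ a : Fin m → ℝ, e2norm a = 1 ∧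
          z = (∑ i, ∑ j, a i * ω.1 i j * φ j) + e2norm φ * ω.2.2.2 - ψ φ}}
    ≥ muGordon m n
      {ω | ∀ φ ∈ Φ, 0 ≤ sSup {z : ℝ | ∃ a : Fin m → ℝ, e2norm a = 1 ∧
          z = e2norm φ * (∑ i, ω.2.1 i * a i) + (∑ j, ω.2.2.1 j * φ j) - ψ φ}} := by
  have hcn := Gordon.e2norm_cont (d := n)
  have h := Gordon.approx (muGordon m n) Φ {a : Fin m → ℝ | e2norm a = 1} hΦc
    (Gordon.sphere_compact m) hΦne (Gordon.sphere_nonempty hm) ψ hψ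
    (fun ω φ a => (∑ i, ∑ j, a i * ω.1 i j * φ j) + e2norm φ * ω.2.2.2)
    (fun ω φ a => e2norm φ * (∑ i, ω.2.1 i * a i) + (∑ j, ω.2.2.1 j * φ j))
    (fun ω => by fun_prop) (fun ω => by fun_prop) (fun φ a => by fun_prop)
    (fun K J φ b hb lam => Gordon.finite_concrete φ b hb lam)
  have e1 : ∀ (ω : Gordon.E4 m n) φ, 0 ≤ sSup {z : ℝ | ∃ a : Fin m → ℝ, e2norm a = 1 ∧
          z = (∑ i, ∑ j, a i * ω.1 i j * φ j) + e2norm φ * ω.2.2.2 - ψ φ} ↔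
      ∃ a ∈ {a : Fin m → ℝ | e2norm a = 1},
        ψ φ ≤ (∑ i, ∑ j, a i * ω.1 i j * φ j) + e2norm φ * ω.2.2.2 := by
    intro ω φ
    rw [Gordon.sup_iff hm
      (fun a => (∑ i, ∑ j, a i * ω.1 i j * φ j) + e2norm φ * ω.2.2.2 - ψ φ) (by fun_prop)]
    simp only [sub_nonneg, Set.mem_ofPred_eq]
  have e2 : ∀ (ω : Gordon.E4 m n) φ, 0 ≤ sSup {z : ℝ | ∃ a : Fin m → ℝ, e2norm a = 1 ∧
          z = e2norm φ * (∑ i, ω.2.1 i * a i) + (∑ j, ω.2.2.1 j * φ j) - ψ φ} ↔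
      ∃ a ∈ {a : Fin m → ℝ | e2norm a = 1},
        ψ φ ≤ e2norm φ * (∑ i, ω.2.1 i * a i) + (∑ j, ω.2.2.1 j * φ j) := by
    intro ω φ
    rw [Gordon.sup_iff hm
      (fun a => e2norm φ * (∑ i, ω.2.1 i * a i) + (∑ j, ω.2.2.1 j * φ j) - ψ φ) (by fun_prop)]
    simp only [sub_nonneg, Set.mem_ofPred_eq]
  simp only [e1, e2]
  exact h
end
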